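/- Let X and Y be trees, p ∈ R(X) (a ramification point of X) and q ∈ Y. If h : C(p,X) → C(q,Y) is a homeomorphism, then there exists a homeomorphism 𝔥 : X → Y with 𝔥(p) = q. -/

import Mathlib

open Set Topology TopologicalSpace

universe u

/-- `IndDimLE m α t` means that the small inductive dimension of `α` is at most `m - 1`.
In particular `IndDimLE 0 α t` means `α` is empty (dimension `-1`). -/
def IndDimLE : ℕ → (α : Type u) → TopologicalSpace α → Prop
  | 0, α, _ => IsEmpty α
  | n + 1, α, t =>
      ∀ (x : α) (U : Set α), @IsOpen α t U → x ∈ U →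
        ∃ V : Set α, @IsOpen α t V ∧ x ∈ V ∧ V ⊆ U ∧
          IndDimLE n (↥(@frontier α t V))
            (TopologicalSpace.induced (Subtype.val : ↥(@frontier α t V) → α) t)

/-- The small inductive dimension of a topological space, as an integer
(with junk value if the dimension is infinite). -/
noncomputable def indDim (α : Type u) [t : TopologicalSpace α] : ℤ :=
  sInf {d : ℤ | ∃ m : ℕ, d = (m : ℤ) - 1 ∧ IndDimLE m α t}

section Defs

variable {X : Type u} [TopologicalSpace X]

/-- `A` is an arc, i.e. homeomorphic to `[0,1]`. -/
def IsArcSet (A : Set X) : Prop :=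
  Nonempty (↥A ≃ₜ ↥(Icc (0 : ℝ) 1))

/-- `A` is an arc with end points `a` and `b`. -/
def IsArcFromTo (A : Set X) (a b : X) : Prop :=
  ∃ h : ↥(Icc (0 : ℝ) 1) ≃ₜ ↥A,
    ((h ⟨0, by norm_num⟩ : ↥A) : X) = a ∧ ((h ⟨1, by norm_num⟩ : ↥A) : X) = b

/-- `a` is an end point of the arc `A`. -/
def IsArcEndpoint (A : Set X) (a : X) : Prop := ∃ b, IsArcFromTo A a b

/-- The points of the arc `A` which are not end points of `A`. -/
def arcInterior (A : Set X) : Set X := {x ∈ A | ¬ IsArcEndpoint A x}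

/-- `N` is a simple `n`-od with vertex `v`: the union of `n` arcs emanating from `v`
and otherwise disjoint from each other. -/
def IsSimpleNod (n : ℕ) (N : Set X) (v : X) : Prop :=
  0 < n ∧ ∃ A : Fin n → Set X, (∀ i, IsArcSet (A i)) ∧ (⋃ i, A i) = N ∧
    (∀ i, IsArcEndpoint (A i) v) ∧ ∀ i j, i ≠ j → A i ∩ A j = {v}

/-- `x` has order `n` in the subspace `S`: `x` has a closed neighborhood in `S`
which is a simple `n`-od having `x` as the vertex. -/
def HasOrdIn (S : Set X) (x : X) (n : ℕ) : Prop :=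
  ∃ N : Set X, N ⊆ S ∧ IsClosed N ∧ (∃ U : Set X, IsOpen U ∧ x ∈ U ∧ U ∩ S ⊆ N) ∧
    IsSimpleNod n N x

/-- The order of `x` in the subspace `S`. -/
noncomputable def ordIn (S : Set X) (x : X) : ℕ := sInf {n | HasOrdIn S x n}

/-- End points (order `1`) of the subspace `S`. -/
def endPtsIn (S : Set X) : Set X := {x ∈ S | HasOrdIn S x 1}

/-- Ordinary points (order `2`) of the subspace `S`. -/
def ordinaryIn (S : Set X) : Set X := {x ∈ S | HasOrdIn S x 2}

/-- Ramification points (order `≥ 3`) of the subspace `S`. -/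
def ramifIn (S : Set X) : Set X := {x ∈ S | ∃ n, 3 ≤ n ∧ HasOrdIn S x n}

/-- Vertices (points of order `≠ 2`) of the subspace `S`. -/
def verticesIn (S : Set X) : Set X := {x ∈ S | ¬ HasOrdIn S x 2}

/-- `e` is an edge of the subspace `S`: an arc joining two vertices of `S` and
containing no more than two vertices of `S`. -/
def IsEdgeIn (S : Set X) (e : Set X) : Prop :=
  e ⊆ S ∧ ∃ a b, a ∈ verticesIn S ∧ b ∈ verticesIn S ∧ IsArcFromTo e a b ∧
    e ∩ verticesIn S ⊆ {a, b}

/-- `S` is a simple closed curve. -/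
def IsSimpleClosedCurve (S : Set X) : Prop := Nonempty (↥S ≃ₜ Circle)

end Defs

/-- `X` is an arc (as a space). -/
def IsArcSpace (X : Type u) [TopologicalSpace X] : Prop :=
  Nonempty (X ≃ₜ ↥(Icc (0 : ℝ) 1))

/-- `X` is a finite graph: a continuum which is the union of finitely many arcs, any two
of which are either disjoint or intersect only in one or both of their end points. -/
def IsFiniteGraph (X : Type u) [MetricSpace X] : Prop :=
  CompactSpace X ∧ ConnectedSpace X ∧ Nonempty X ∧
    ∃ 𝒜 : Finset (Set X), (∀ A ∈ 𝒜, IsArcSet A) ∧ ⋃₀ (𝒜 : Set (Set X)) = univ ∧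
      ∀ A ∈ 𝒜, ∀ B ∈ 𝒜, A ≠ B → ∀ x ∈ A ∩ B, IsArcEndpoint A x ∧ IsArcEndpoint B x

/-- `X` is a tree: a finite graph without simple closed curves. -/
def IsTree (X : Type u) [MetricSpace X] : Prop :=
  IsFiniteGraph X ∧ ∀ S : Set X, ¬ IsSimpleClosedCurve S

/-- `X` is neither an arc nor a simple `n`-od. -/
def NotArcNotNod (X : Type u) [MetricSpace X] : Prop :=
  ¬ IsArcSpace X ∧ ∀ (n : ℕ) (v : X), ¬ IsSimpleNod n (univ : Set X) v

/-- `T(X)`: the union of all edges of `X` disjoint from the set of end points of `X`. -/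
def Tpart (X : Type u) [MetricSpace X] : Set X :=
  ⋃₀ {e : Set X | IsEdgeIn (univ : Set X) e ∧ e ∩ endPtsIn (univ : Set X) = ∅}

/-- `Sub_p(T(X))`: subtrees of `T(X)` containing `p` (subcontinua of `T(X)` all of whose
edges are edges of `X`). -/
def SubTreesP (X : Type u) [MetricSpace X] (p : X) : Set (Set X) :=
  {Y | Y ⊆ Tpart X ∧ p ∈ Y ∧ IsCompact Y ∧ IsConnected Y ∧
    ∀ e : Set X, IsEdgeIn Y e → IsEdgeIn (univ : Set X) e}

/-- Subtrees of the tree `X`. -/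
def Subtrees (X : Type u) [MetricSpace X] : Set (Set X) :=
  {Y | IsCompact Y ∧ IsConnected Y ∧
    ∀ e : Set X, IsEdgeIn Y e → IsEdgeIn (univ : Set X) e}

/-- The smallest subtree of `X` containing `a` and `b`. -/
def treeHull (X : Type u) [MetricSpace X] (a b : X) : Set X :=
  ⋂₀ {Y | Y ∈ Subtrees X ∧ a ∈ Y ∧ b ∈ Y}

/-- The hyperspace `C(p,X)` of subcontinua of `X` containing `p`,
with the Hausdorff metric. -/
def CP (X : Type u) [MetricSpace X] (p : X) : Type u :=
  {A : NonemptyCompacts X // IsConnected (A : Set X) ∧ p ∈ (A : Set X)}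

noncomputable instance (X : Type u) [MetricSpace X] (p : X) : MetricSpace (CP X p) :=
  inferInstanceAs (MetricSpace
    {A : NonemptyCompacts X // IsConnected (A : Set X) ∧ p ∈ (A : Set X)})

/-- The underlying subset of `X` of an element of `C(p,X)`. -/
def CP.set {X : Type u} [MetricSpace X] {p : X} (A : CP X p) : Set X := (A.1 : Set X)

/-- `U_n(X)`: elements of `C(p,X)` having a neighborhood in `C(p,X)` homeomorphic to
the `n`-cell `[0,1]^n`. -/
def Un (X : Type u) [MetricSpace X] (p : X) (n : ℕ) : Set (CP X p) :=
  {A | ∃ N : Set (CP X p), N ∈ 𝓝 A ∧ Nonempty (↥N ≃ₜ (Fin n → ↥(Icc (0 : ℝ) 1)))}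

/-- `𝒰(X) = ⋃ₙ U_n(X)`. -/
def UnionUn (X : Type u) [MetricSpace X] (p : X) : Set (CP X p) := ⋃ n : ℕ, Un X p n

/-- The edges of `X` which are not edges of `Y` and intersect `Y`. -/
def incidentE (X : Type u) [MetricSpace X] (Y : Set X) : Set (Set X) :=
  {e | IsEdgeIn (univ : Set X) e ∧ ¬ IsEdgeIn Y e ∧ (e ∩ Y).Nonempty}

/-- `U_Y`: elements of `C(p,X)` of the form `Y` together with exactly one interior point
of each edge of `X` incident on `Y`. -/
def UofY (X : Type u) [MetricSpace X] (p : X) (Y : Set X) : Set (CP X p) :=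
  {B | ∃ f : ↥(incidentE X Y) → X,
    (∀ e : ↥(incidentE X Y), f e ∈ arcInterior (e : Set X)) ∧ B.set = Y ∪ range f}

/-- `(X,p)` has unique hyperspace `C(p,X)` in the class of trees. -/
def UniqueHyperspaceInTrees (X : Type u) [MetricSpace X] (p : X) : Prop :=
  ∀ (Y : Type u) [MetricSpace Y], IsTree Y → ∀ q : Y,
    Nonempty (CP X p ≃ₜ CP Y q) → ∃ 𝔥 : X ≃ₜ Y, 𝔥 p = q

/-!
Orient the edges of a tree away from a point and order them accordingly. The edges then form a
rooted forest `E`, and a subcontinuum containing the point is recorded by how much of each edge it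
covers: it covers a positive part of an edge only if it covers all preceding edges. In this way the
hyperspace becomes a cubical complex in `ℝ^E`. After merging every edge that has a single successor
with this successor, its maximal open cells correspond to the lower sets `Y` of non-maximal edges,
the dimension of a cell being the number of edges growing out of `Y`. By invariance of dimension, a
consequence of Lebesgue's covering theorem, a homeomorphism permutes these cells and preserves their
dimensions. The points lying in exactly two cells detect the covering pairs of lower sets, hence the
lattice of lower sets together with its dimension function, and these determine the forest up to
isomorphism and so the tree up to a homeomorphism fixing the root.
-/

/-! ### Cubical cochains mod 2 -/

namespace CubicalSperner

/-- The coboundary of a cubical cochain mod 2 on the lattice of points of `ℕ → ℕ`. A cochain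
assigns a value to the cube with lowest vertex `v` spanned by the directions in `T`. -/
def coboundary (a : Finset ℕ → (ℕ → ℕ) → ZMod 2) (T : Finset ℕ) (v : ℕ → ℕ) : ZMod 2 :=
  ∑ t ∈ T, (a (T.erase t) (v + Pi.single t 1) + a (T.erase t) v)

/-- The vertex opposite to `v` in the cube with lowest vertex `v` spanned by the directions
in `T`. -/
def vertex (T : Finset ℕ) (v : ℕ → ℕ) : ℕ → ℕ := fun i => v i + if i ∈ T then 1 else 0

/-- The cup product of the coboundaries of the vertex labellings `s 0, …, s (k - 1)`. -/
def cup (s : ℕ → (ℕ → ℕ) → ZMod 2) : ℕ → Finset ℕ → (ℕ → ℕ) → ZMod 2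
  | 0 => fun _ _ => 1
  | k + 1 => coboundary fun T v => cup s k T v * s k (vertex T v)

lemma coboundary_coboundary (a : Finset ℕ → (ℕ → ℕ) → ZMod 2) (T : Finset ℕ) (v : ℕ → ℕ) :
    coboundary (coboundary a) T v = 0 := by
  simp_rw [coboundary, ← Finset.sum_add_distrib]
  rw [Finset.sum_sigma']
  refine Finset.sum_involution (fun x _ => ⟨x.2, x.1⟩) ?_ ?_ ?_ fun _ _ => rfl
  · rintro ⟨t, u⟩ -
    simp only [Finset.erase_right_comm (a := u) (b := t), add_right_comm v (Pi.single u 1)]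
    grind [CharTwo.add_self_eq_zero]
  · rintro ⟨t, u⟩ h - heq
    simp only [Finset.mem_sigma, Finset.mem_erase] at h
    exact h.2.1 (Sigma.mk.injEq .. ▸ heq).1
  · rintro ⟨t, u⟩ h
    simp only [Finset.mem_sigma, Finset.mem_erase] at h ⊢
    exact ⟨h.2.2, Ne.symm h.2.1, h.1⟩

lemma vertex_apply_of_notMem {T : Finset ℕ} {i : ℕ} (hi : i ∉ T) (v : ℕ → ℕ) :
    vertex T v i = v i := by
  simp [vertex, hi]

lemma vertex_erase_add_single {T : Finset ℕ} {t : ℕ} (ht : t ∈ T) (v : ℕ → ℕ) :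
    vertex (T.erase t) (v + Pi.single t 1) = vertex T v := by
  funext i
  rcases eq_or_ne i t with rfl | h
  · simp [vertex, ht]
  · simp [vertex, h]

section Cup

variable (s : ℕ → (ℕ → ℕ) → ZMod 2)

lemma coboundary_cup (k : ℕ) (T : Finset ℕ) (v : ℕ → ℕ) : coboundary (cup s k) T v = 0 := by
  cases k with
  | zero => simp [coboundary, cup, CharTwo.add_self_eq_zero]
  | succ k => exact coboundary_coboundary _ T v

lemma cup_succ (k : ℕ) (T : Finset ℕ) (v : ℕ → ℕ) :
    cup s (k + 1) T v =
      ∑ t ∈ T, cup s k (T.erase t) v * (s k (vertex T v) + s k (vertex (T.erase t) v)) := by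
  have h := coboundary_cup s k T v
  simp only [coboundary] at h
  rw [← sub_eq_zero, ← mul_zero (s k (vertex T v)), ← h, cup, coboundary, Finset.mul_sum,
    ← Finset.sum_sub_distrib]
  refine Finset.sum_congr rfl fun t ht => ?_
  rw [vertex_erase_add_single ht]
  linear_combination -CharTwo.add_self_eq_zero (cup s k (T.erase t) v * s k (vertex T v))

variable {s}

lemma cup_eq_zero {j : ℕ} : ∀ {k : ℕ}, j < k → ∀ {T : Finset ℕ} {v : ℕ → ℕ},
    (∀ U ⊆ T, s j (vertex U v) = s j v) → cup s k T v = 0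
  | 0, hj, _, _, _ => absurd hj (Nat.not_lt_zero j)
  | k + 1, hj, T, v, h => by
    rw [cup_succ]
    refine Finset.sum_eq_zero fun t _ => ?_
    rcases Nat.lt_succ_iff_lt_or_eq.1 hj with hk | rfl
    · rw [cup_eq_zero hk fun U hU => h U (hU.trans (Finset.erase_subset t T)), zero_mul]
    · rw [h T subset_rfl, h _ (Finset.erase_subset t T), CharTwo.add_self_eq_zero, mul_zero]

end Cup

section BoxSum

/-- The sum of `F` over the lattice points whose first `k` coordinates are less than `N` and whose
other coordinates are those of `w`. -/
def boxSum (N : ℕ) : ℕ → ((ℕ → ℕ) → ZMod 2) → (ℕ → ℕ) → ZMod 2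
  | 0, F, w => F w
  | k + 1, F, w => ∑ j ∈ Finset.range N, boxSum N k F (Function.update w k j)

variable {N : ℕ}

lemma boxSum_congr : ∀ {k : ℕ} {F G : (ℕ → ℕ) → ZMod 2} {w : ℕ → ℕ},
    (∀ v, (∀ i, k ≤ i → v i = w i) → F v = G v) → boxSum N k F w = boxSum N k G w
  | 0, _, _, w, h => h w fun _ _ => rfl
  | k + 1, _, _, w, h => by
    refine Finset.sum_congr rfl fun j _ => boxSum_congr fun v hv => h v fun i hi => ?_
    rw [hv i (by omega), Function.update_of_ne (by omega)]

lemma boxSum_add : ∀ (k : ℕ) (F G : (ℕ → ℕ) → ZMod 2) (w : ℕ → ℕ),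
    boxSum N k (fun v => F v + G v) w = boxSum N k F w + boxSum N k G w
  | 0, _, _, _ => rfl
  | k + 1, F, G, w => by
    simp only [boxSum, boxSum_add k, Finset.sum_add_distrib]

lemma boxSum_zero : ∀ (k : ℕ) (w : ℕ → ℕ), boxSum N k (fun _ => 0) w = 0
  | 0, _ => rfl
  | k + 1, w => by simp only [boxSum, boxSum_zero k, Finset.sum_const_zero]

lemma boxSum_sum (k : ℕ) (T : Finset ℕ) (F : ℕ → (ℕ → ℕ) → ZMod 2) (w : ℕ → ℕ) :
    boxSum N k (fun v => ∑ t ∈ T, F t v) w = ∑ t ∈ T, boxSum N k (F t) w := by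
  induction T using Finset.induction_on with
  | empty => simp only [Finset.sum_empty, boxSum_zero]
  | insert t T ht ih => simp only [Finset.sum_insert ht, boxSum_add, ih]

lemma boxSum_shift : ∀ {k t : ℕ}, k ≤ t → ∀ (F : (ℕ → ℕ) → ZMod 2) (w : ℕ → ℕ),
    boxSum N k (fun v => F (v + Pi.single t 1)) w = boxSum N k F (w + Pi.single t 1)
  | 0, _, _, _, _ => rfl
  | k + 1, t, h, F, w => by
    refine Finset.sum_congr rfl fun j _ => ?_
    rw [boxSum_shift (by omega)]
    congr 1
    funext i
    rcases eq_or_ne i k with rfl | hi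
    · simp [show i ≠ t by omega]
    · simp [hi]

lemma boxSum_succ_diff (k : ℕ) (F : (ℕ → ℕ) → ZMod 2) (w : ℕ → ℕ) :
    boxSum N (k + 1) (fun v => F (v + Pi.single k 1) + F v) w =
      boxSum N k F (Function.update w k N) + boxSum N k F (Function.update w k 0) := by
  have update_succ (j : ℕ) :
      Function.update w k j + Pi.single k 1 = Function.update w k (j + 1) := by
    funext i
    rcases eq_or_ne i k with rfl | hi
    · simp
    · simp [hi]
  simp only [boxSum, boxSum_add, boxSum_shift le_rfl, update_succ]
  simpa only [CharTwo.sub_eq_add] using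
    Finset.sum_range_sub (fun j => boxSum N k F (Function.update w k j)) N

lemma boxSum_diff_eq_zero {t : ℕ} {F : (ℕ → ℕ) → ZMod 2}
    (h0 : ∀ v, v t = 0 → F v = 0) (hN : ∀ v, v t = N → F v = 0) :
    ∀ {k : ℕ}, t < k → ∀ w : ℕ → ℕ, boxSum N k (fun v => F (v + Pi.single t 1) + F v) w = 0
  | 0, h, _ => absurd h (Nat.not_lt_zero t)
  | k + 1, h, w => by
    rcases Nat.lt_succ_iff_lt_or_eq.1 h with hk | rfl
    · exact Finset.sum_eq_zero fun j _ => boxSum_diff_eq_zero h0 hN hk _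
    · rw [boxSum_succ_diff, boxSum_congr (G := fun _ => 0),
        boxSum_congr (F := F) (G := fun _ => 0)]
      · rw [boxSum_zero, boxSum_zero, add_zero]
      · exact fun v hv => h0 v (by simp [hv t le_rfl])
      · exact fun v hv => hN v (by simp [hv t le_rfl])

lemma exists_ne_zero_of_boxSum_ne_zero : ∀ {k : ℕ} {F : (ℕ → ℕ) → ZMod 2} {w : ℕ → ℕ},
    boxSum N k F w ≠ 0 → ∃ v, (∀ i < k, v i < N) ∧ F v ≠ 0 ∧ ∀ i, k ≤ i → v i = w i
  | 0, _, w, h => ⟨w, fun i hi => absurd hi (Nat.not_lt_zero i), h, fun _ _ => rfl⟩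
  | k + 1, F, w, h => by
    obtain ⟨j, hj, hne⟩ := Finset.exists_ne_zero_of_sum_ne_zero h
    obtain ⟨v, hv, hF, hw⟩ := exists_ne_zero_of_boxSum_ne_zero hne
    refine ⟨v, fun i hi => ?_, hF, fun i hi => ?_⟩
    · rcases Nat.lt_succ_iff_lt_or_eq.1 hi with hk | rfl
      · exact hv i hk
      · simpa [hw i le_rfl] using hj
    · rw [hw i (by omega), Function.update_of_ne (by omega)]

end BoxSum

variable {N : ℕ} {s : ℕ → (ℕ → ℕ) → ZMod 2}

lemma cup_erase_eq_zero_of_const {t k : ℕ} (htk : t < k) {c : ℕ} {ε : ZMod 2}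
    (hs : ∀ v, v t = c → s t v = ε) (T : Finset ℕ) {v : ℕ → ℕ} (hv : v t = c) :
    cup s k (T.erase t) v = 0 :=
  cup_eq_zero htk fun U hU => by
    have htU : t ∉ U := fun h => Finset.notMem_erase t T (hU h)
    rw [hs v hv, hs _ ((vertex_apply_of_notMem htU v).trans hv)]

lemma boxSum_coboundary (k : ℕ) (a : Finset ℕ → (ℕ → ℕ) → ZMod 2) (T : Finset ℕ) (w : ℕ → ℕ) :
    boxSum N k (coboundary a T) w =
      ∑ t ∈ T, boxSum N k (fun v => a (T.erase t) (v + Pi.single t 1) + a (T.erase t) v) w :=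
  boxSum_sum k T _ w

-- Stokes' formula leaves only the face `v k = N`, where it is the statement for `k`.
lemma boxSum_cup (h0 : ∀ i v, v i = 0 → s i v = 0) (h1 : ∀ i v, v i = N → s i v = 1) :
    ∀ (k : ℕ) (w : ℕ → ℕ), boxSum N k (cup s k (Finset.range k)) w = 1
  | 0, _ => rfl
  | k + 1, w => by
    have erase_last : (Finset.range (k + 1)).erase k = Finset.range k := by
      simp [Finset.range_add_one]
    have vertex_last (v : ℕ → ℕ) : vertex (Finset.range k) v k = v k :=
      vertex_apply_of_notMem Finset.notMem_range_self v
    rw [cup, boxSum_coboundary, Finset.sum_range_succ, Finset.sum_eq_zero, zero_add, erase_last,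
      boxSum_succ_diff k fun v =>
        cup s k (Finset.range k) v * s k (vertex (Finset.range k) v),
      boxSum_congr (G := cup s k (Finset.range k)),
      boxSum_congr (w := Function.update w k 0) (G := fun _ => 0), boxSum_zero, add_zero,
      boxSum_cup h0 h1 k]
    · intro v hv
      rw [h0 k _ (by simp [vertex_last, hv k le_rfl]), mul_zero]
    · intro v hv
      rw [h1 k _ (by simp [vertex_last, hv k le_rfl]), mul_one]
    · intro t ht
      have htk : t < k := Finset.mem_range.1 ht
      exact boxSum_diff_eq_zero (F := fun v => cup s k ((Finset.range (k + 1)).erase t) v *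
          s k (vertex ((Finset.range (k + 1)).erase t) v))
        (fun v hv => mul_eq_zero_of_left (cup_erase_eq_zero_of_const htk (h0 t) _ hv) _)
        (fun v hv => mul_eq_zero_of_left (cup_erase_eq_zero_of_const htk (h1 t) _ hv) _)
        (by omega) w

theorem exists_cube_ne (h0 : ∀ i v, v i = 0 → s i v = 0) (h1 : ∀ i v, v i = N → s i v = 1)
    (n : ℕ) : ∃ v : ℕ → ℕ, (∀ i < n, v i < N) ∧ ∀ i < n, ∃ U, s i (vertex U v) ≠ s i v := by
  obtain ⟨v, hv, hc, -⟩ := exists_ne_zero_of_boxSum_ne_zero (N := N) (k := n) (w := 0)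
    (F := cup s n (Finset.range n)) (by rw [boxSum_cup h0 h1]; exact one_ne_zero)
  refine ⟨v, hv, fun i hi => ?_⟩
  by_contra! h
  exact hc (cup_eq_zero hi fun U _ => h U)

theorem exists_cube_mul_nonpos (hN : N ≠ 0) {f : ℕ → (ℕ → ℕ) → ℝ}
    (h0 : ∀ i v, v i = 0 → f i v ≤ 0) (h1 : ∀ i v, v i = N → 0 ≤ f i v) (n : ℕ) :
    ∃ v : ℕ → ℕ, (∀ i < n, v i < N) ∧ ∀ i < n, ∃ U, f i v * f i (vertex U v) ≤ 0 := by
  classical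
  let s : ℕ → (ℕ → ℕ) → ZMod 2 := fun i v =>
    if v i = 0 then 0 else if v i = N then 1 else if 0 ≤ f i v then 1 else 0
  have sign_of_label (i : ℕ) (v : ℕ → ℕ) : s i v = 0 ∧ f i v ≤ 0 ∨ s i v = 1 ∧ 0 ≤ f i v := by
    have := h0 i v
    have := h1 i v
    simp only [s]
    grind
  obtain ⟨v, hv, hne⟩ := exists_cube_ne (s := s) (N := N)
    (fun i v hv => if_pos hv)
    (fun i v hv => by simp only [s, hv, hN, if_false, if_true]) n
  refine ⟨v, hv, fun i hi => (hne i hi).imp fun U hU => ?_⟩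
  rcases sign_of_label i v with ⟨h, hf⟩ | ⟨h, hf⟩ <;>
    rcases sign_of_label i (vertex U v) with ⟨h', hf'⟩ | ⟨h', hf'⟩
  · exact absurd (h'.trans h.symm) hU
  · exact mul_nonpos_of_nonpos_of_nonneg hf hf'
  · exact mul_nonpos_of_nonneg_of_nonpos hf hf'
  · exact absurd (h'.trans h.symm) hU

end CubicalSperner

/-! ### Invariance of dimension -/

section Miranda

variable {n : ℕ}

/-- The point of the unit cube with coordinates `v i / N`, cut off at `1`. -/
noncomputable def gridPoint (n N : ℕ) (v : ℕ → ℕ) : Icc (0 : Fin n → ℝ) 1 :=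
  ⟨fun i => min (v i / N) 1, fun _ => le_min (by positivity) zero_le_one,
    fun _ => min_le_right _ _⟩

lemma dist_gridPoint_vertex_le (n N : ℕ) (v : ℕ → ℕ) (U : Finset ℕ) :
    dist (gridPoint n N v) (gridPoint n N (CubicalSperner.vertex U v)) ≤ 1 / N := by
  refine (dist_pi_le_iff (by positivity)).2 fun i => ?_
  have step : |(v i : ℝ) - CubicalSperner.vertex U v i| ≤ 1 := by
    unfold CubicalSperner.vertex
    split_ifs <;> simp
  calc |min ((v i : ℝ) / N) 1 - min ((CubicalSperner.vertex U v i : ℝ) / N) 1|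
      ≤ |(v i : ℝ) / N - CubicalSperner.vertex U v i / N| := abs_inf_sub_inf_le_abs _ _ _
    _ = |(v i : ℝ) - CubicalSperner.vertex U v i| / N := by rw [← sub_div, abs_div, Nat.abs_cast]
    _ ≤ 1 / N := by gcongr

variable {F : Icc (0 : Fin n → ℝ) 1 → Fin n → ℝ}

theorem exists_norm_lt_of_cube_faces (hF : Continuous F) (h0 : ∀ x i, x.1 i = 0 → F x i ≤ 0)
    (h1 : ∀ x i, x.1 i = 1 → 0 ≤ F x i) {ε : ℝ} (hε : 0 < ε) : ∃ x, ‖F x‖ < ε := by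
  obtain ⟨δ, hδ, hclose⟩ := Metric.uniformContinuous_iff.1
    (CompactSpace.uniformContinuous_of_continuous hF) ε hε
  obtain ⟨N, hN⟩ := exists_nat_one_div_lt hδ
  obtain ⟨v, -, hv⟩ := CubicalSperner.exists_cube_mul_nonpos (N := N + 1) N.succ_ne_zero
    (f := fun i v => if h : i < n then F (gridPoint n (N + 1) v) ⟨i, h⟩ else 0)
    (fun i v hv => by
      split_ifs with h
      · exact h0 _ _ (by simp [gridPoint, hv])
      · exact le_rfl)
    (fun i v hv => by
      split_ifs with h
      · exact h1 _ _ (by simp [gridPoint, hv, Nat.cast_add_one_ne_zero])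
      · exact le_rfl) n
  refine ⟨gridPoint n (N + 1) v, (pi_norm_lt_iff hε).2 fun i => ?_⟩
  obtain ⟨U, hU⟩ := hv i i.2
  simp only [i.2, dite_true] at hU
  set a := F (gridPoint n (N + 1) v) i
  set b := F (gridPoint n (N + 1) (CubicalSperner.vertex U v)) i
  calc |a| ≤ |a - b| := sq_le_sq.1 (by nlinarith [sq_nonneg b])
    _ ≤ dist (F (gridPoint n (N + 1) v)) (F (gridPoint n (N + 1) (CubicalSperner.vertex U v))) :=
      dist_le_pi_dist (F (gridPoint n (N + 1) v)) _ i
    _ < ε := hclose ((dist_gridPoint_vertex_le n (N + 1) v U).trans_lt (by exact_mod_cast hN))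

theorem poincare_miranda (hF : Continuous F) (h0 : ∀ x i, x.1 i = 0 → F x i ≤ 0)
    (h1 : ∀ x i, x.1 i = 1 → 0 ≤ F x i) : ∃ x, F x = 0 := by
  have range_closed : IsClosed (range F) := (isCompact_range hF).isClosed
  refine range_closed.closure_subset (Metric.mem_closure_iff.2 fun ε hε => ?_)
  obtain ⟨x, hx⟩ := exists_norm_lt_of_cube_faces hF h0 h1 hε
  exact ⟨F x, mem_range_self x, by rwa [dist_zero_left]⟩

theorem exists_forall_notMem_of_cube_faces {A B : Fin n → Set (Icc (0 : Fin n → ℝ) 1)}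
    (hA : ∀ k, IsClosed (A k)) (hB : ∀ k, IsClosed (B k)) (hAB : ∀ k, Disjoint (A k) (B k))
    (hA1 : ∀ k, ∀ x ∈ A k, x.1 k ≠ 1) (hB0 : ∀ k, ∀ x ∈ B k, x.1 k ≠ 0) :
    ∃ x, ∀ k, x ∉ A k ∧ x ∉ B k := by
  have face_closed (k : Fin n) (r : ℝ) : IsClosed {x : Icc (0 : Fin n → ℝ) 1 | x.1 k = r} :=
    isClosed_eq ((continuous_apply k).comp continuous_subtype_val) continuous_const
  have separated (k : Fin n) : Disjoint (A k ∪ {x | x.1 k = 0}) (B k ∪ {x | x.1 k = 1}) := by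
    rw [Set.disjoint_left]
    rintro x (hxA | hx0) (hxB | hx1)
    · exact Set.disjoint_left.1 (hAB k) hxA hxB
    · exact hA1 k x hxA hx1
    · exact hB0 k x hxB hx0
    · exact zero_ne_one (hx0.symm.trans hx1)
  choose f hf0 hf1 _ using fun k => exists_continuous_zero_one_of_isClosed
    ((hA k).union (face_closed k 0)) ((hB k).union (face_closed k 1)) (separated k)
  obtain ⟨x, hx⟩ := poincare_miranda (F := fun x k => f k x - 1 / 2) (by fun_prop)
    (fun x k hk => by norm_num [hf0 k (Or.inr hk)]) (fun x k hk => by norm_num [hf1 k (Or.inr hk)])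
  refine ⟨x, fun k => ⟨fun hxA => ?_, fun hxB => ?_⟩⟩ <;> have := congrFun hx k
  · norm_num [hf0 k (Or.inl hxA)] at this
  · norm_num [hf1 k (Or.inl hxB)] at this

end Miranda

section ColouredGrid

/-- The `k`-th colour of a covering of `ℝ^m` by `m + 1` disjoint unions of cubes: the points all
of whose coordinates have distance at least `1 / 2` from `k + (m + 1)ℤ`. -/
def gridColour (m k : ℕ) : Set (Fin m → ℝ) :=
  {y | ∀ (i : Fin m) (a : ℤ), 1 / 2 ≤ |y i - (k + (m + 1) * a : ℤ)|}

/-- The position of the cube of colour `k` containing a point of `gridColour m k`. -/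
noncomputable def gridIndex (m k : ℕ) (y : Fin m → ℝ) (i : Fin m) : ℤ := ⌊(y i - k) / (m + 1)⌋

lemma isClosed_gridColour (m k : ℕ) : IsClosed (gridColour m k) := by
  simp only [gridColour, ofPred_forall]
  exact isClosed_iInter fun i => isClosed_iInter fun a =>
    isClosed_le continuous_const (by fun_prop)

lemma half_le_abs_sub_of_round_ne {x : ℝ} {z : ℤ} (h : round x ≠ z) : 1 / 2 ≤ |x - z| := by
  have one_le : (1 : ℝ) ≤ |(round x : ℝ) - z| := by
    exact_mod_cast Int.one_le_abs (sub_ne_zero.2 h)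
  have triangle : |(round x : ℝ) - z| ≤ |x - round x| + |x - z| := by
    rw [abs_sub_comm x (round x)]
    exact abs_sub_le _ _ _
  linarith [abs_sub_round x]

lemma exists_mem_gridColour {m : ℕ} (y : Fin m → ℝ) : ∃ k ≤ m, y ∈ gridColour m k := by
  obtain ⟨c, hc⟩ : ∃ c : ZMod (m + 1), ∀ i, (round (y i) : ZMod (m + 1)) ≠ c := by
    by_contra! h
    have := Fintype.card_le_of_surjective (fun i => (round (y i) : ZMod (m + 1))) h
    simp at this
  refine ⟨c.val, Nat.lt_succ_iff.1 c.val_lt, fun i a => half_le_abs_sub_of_round_ne fun h => ?_⟩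
  have card_eq_zero : (m + 1 : ZMod (m + 1)) = 0 := by exact_mod_cast ZMod.natCast_self (m + 1)
  exact hc i (by simp [h, card_eq_zero])

lemma continuousAt_floor {x : ℝ} (hx : (⌊x⌋ : ℝ) ≠ x) : ContinuousAt (Int.floor : ℝ → ℤ) x :=
  continuousAt_const.congr <| Filter.mem_of_superset
    (Ioo_mem_nhds ((Int.floor_le x).lt_of_ne hx) (Int.lt_floor_add_one x))
    fun _ hy => (Int.floor_eq_iff.2 ⟨hy.1.le, hy.2⟩).symm

lemma continuousOn_gridIndex (m k : ℕ) : ContinuousOn (gridIndex m k) (gridColour m k) := by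
  intro y hy
  refine ContinuousAt.continuousWithinAt (continuousAt_pi.2 fun i => ?_)
  have ne_floor : (⌊(y i - k) / (m + 1)⌋ : ℝ) ≠ (y i - k) / (m + 1) := by
    intro h
    rw [eq_div_iff (by positivity)] at h
    have := hy i ⌊(y i - k) / (m + 1)⌋
    push_cast at this
    rw [mul_comm, h, add_sub_cancel, sub_self] at this
    norm_num at this
  exact (continuousAt_floor ne_floor).comp (f := fun y : Fin m → ℝ => (y i - k) / (m + 1))
    (((continuous_apply i).sub continuous_const).div_const _).continuousAt

lemma dist_le_of_gridIndex_eq {m k : ℕ} {y z : Fin m → ℝ} (h : gridIndex m k y = gridIndex m k z) :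
    dist y z ≤ m + 1 := by
  have hm : (0 : ℝ) < m + 1 := by positivity
  refine (dist_pi_le_iff hm.le).2 fun i => ?_
  have := Int.abs_sub_lt_one_of_floor_eq_floor (congrFun h i)
  rw [← sub_div, sub_sub_sub_cancel_right, abs_div, abs_of_pos hm, div_lt_one hm] at this
  exact this.le

end ColouredGrid

section InvarianceOfDimension

lemma exists_smul_dist_le_imp_dist_lt {α E : Type*} [PseudoMetricSpace α] [CompactSpace α]
    [NormedAddCommGroup E] [NormedSpace ℝ E] {g : α → E} (hg : Continuous g)
    (hinj : Function.Injective g) {δ R : ℝ} (hδ : 0 < δ) (hR : 0 < R) :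
    ∃ c : ℝ, ∀ x y, dist (c • g x) (c • g y) ≤ R → dist x y < δ := by
  have far_compact : IsCompact {p : α × α | δ ≤ dist p.1 p.2} :=
    (isClosed_le continuous_const continuous_dist).isCompact
  obtain ⟨r, hr, hfar⟩ := far_compact.exists_forall_le' (f := fun p => dist (g p.1) (g p.2))
    (by fun_prop) (a := 0) fun p hp => dist_pos.2 fun h => by
      have : δ ≤ dist p.1 p.2 := hp
      rw [hinj h, dist_self] at this
      exact this.not_gt hδ
  refine ⟨2 * R / r, fun x y hxy => ?_⟩
  by_contra! hlt
  have := hfar (x, y) hlt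
  rw [dist_smul₀, Real.norm_of_nonneg (by positivity), div_mul_eq_mul_div, div_le_iff₀ hr] at hxy
  nlinarith

-- Lebesgue's covering argument: pulling back the coloured grid along a large multiple of `g` covers
-- the cube by closed sets none of whose pieces meets two opposite faces.
theorem le_of_continuous_injective_cube {m n : ℕ} {g : Icc (0 : Fin n → ℝ) 1 → Fin m → ℝ}
    (hg : Continuous g) (hinj : Function.Injective g) : n ≤ m := by
  by_contra! hmn
  obtain ⟨c, hc⟩ := exists_smul_dist_le_imp_dist_lt hg hinj one_pos (R := m + 1) (by positivity)
  let S : Fin n → Set (Icc (0 : Fin n → ℝ) 1) := fun k => (c • g) ⁻¹' gridColour m k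
  let idx : Fin n → Icc (0 : Fin n → ℝ) 1 → Fin m → ℤ := fun k => gridIndex m k ∘ (c • g)
  let bottom : Fin n → Set (Fin m → ℤ) := fun k => idx k '' {y | y.1 k = 0}
  have piece_closed (k : Fin n) (T : Set (Fin m → ℤ)) : IsClosed (S k ∩ idx k ⁻¹' T) :=
    ((continuousOn_gridIndex m k).comp (hg.const_smul c).continuousOn
      fun _ h => h).preimage_isClosed_of_isClosed
        ((isClosed_gridColour m k).preimage (hg.const_smul c)) (isClosed_discrete T)
  obtain ⟨x, hx⟩ := exists_forall_notMem_of_cube_faces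
    (fun k => piece_closed k (bottom k)) (fun k => piece_closed k (bottom k)ᶜ)
    (fun k => Set.disjoint_left.2 fun x hA hB => hB.2 hA.2)
    (fun k x ⟨_, y, hy0, hyx⟩ hx1 => by
      have hlt := hc x y (dist_le_of_gridIndex_eq hyx.symm)
      have hle := dist_le_pi_dist x.1 y.1 k
      rw [hx1, show y.1 k = 0 from hy0, Real.dist_0_eq_abs, abs_one] at hle
      exact hle.not_gt hlt)
    (fun k x hxB hx0 => hxB.2 ⟨x, hx0, rfl⟩)
  obtain ⟨k, hkm, hk⟩ := exists_mem_gridColour (c • g x)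
  rcases em (idx ⟨k, by omega⟩ x ∈ bottom ⟨k, by omega⟩) with hbot | hbot
  · exact (hx ⟨k, by omega⟩).1 ⟨hk, hbot⟩
  · exact (hx ⟨k, by omega⟩).2 ⟨hk, hbot⟩

theorem le_of_isOpen_of_continuous_injective {m n : ℕ} {W : Set (Fin n → ℝ)} (hW : IsOpen W)
    (hne : W.Nonempty) {g : W → Fin m → ℝ} (hg : Continuous g) (hinj : Function.Injective g) :
    n ≤ m := by
  obtain ⟨a, ha⟩ := hne
  obtain ⟨r, hr, hball⟩ := Metric.isOpen_iff.1 hW a ha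
  have cube_subset (y : Icc (0 : Fin n → ℝ) 1) : a + (r / 2) • y.1 ∈ W := by
    refine hball ?_
    have norm_le : ‖y.1‖ ≤ 1 := (pi_norm_le_iff_of_nonneg zero_le_one).2 fun i =>
      abs_le.2 ⟨by linarith [y.2.1 i, show (0 : Fin n → ℝ) i = 0 from rfl], y.2.2 i⟩
    rw [Metric.mem_ball, dist_self_add_left, norm_smul, Real.norm_of_nonneg (by positivity)]
    nlinarith
  refine le_of_continuous_injective_cube (g := fun y => g ⟨a + (r / 2) • y.1, cube_subset y⟩)
    (by fun_prop) (hinj.comp fun y z hyz => Subtype.ext ?_)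
  exact smul_right_injective _ (by positivity) (add_left_cancel (Subtype.ext_iff.1 hyz))

theorem chart_dim_le {K : Type*} [TopologicalSpace K] {m n : ℕ} {U V : Set K} (hV : IsOpen V)
    (e : U ≃ₜ (Fin n → ℝ)) (e' : V ≃ₜ (Fin m → ℝ)) (hUV : (U ∩ V).Nonempty) : n ≤ m := by
  obtain ⟨x, hxU, hxV⟩ := hUV
  refine le_of_isOpen_of_continuous_injective (W := {y | (e.symm y : K) ∈ V})
    (hV.preimage (continuous_subtype_val.comp e.symm.continuous)) ⟨e ⟨x, hxU⟩, by simpa using hxV⟩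
    (g := fun y => e' ⟨e.symm y, y.2⟩) (by fun_prop) fun y z h => ?_
  exact Subtype.ext (e.symm.injective (Subtype.ext (Subtype.mk.inj (e'.injective h))))

theorem chart_dim_eq {K : Type*} [TopologicalSpace K] {m n : ℕ} {U V : Set K} (hU : IsOpen U)
    (hV : IsOpen V) (e : U ≃ₜ (Fin n → ℝ)) (e' : V ≃ₜ (Fin m → ℝ)) (hUV : (U ∩ V).Nonempty) :
    n = m :=
  le_antisymm (chart_dim_le hV e e' hUV) (chart_dim_le hU e' e (by rwa [inter_comm]))

end InvarianceOfDimension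

/-! ### Cell complexes -/

section CellComplex

variable {K K' ι ι' : Type*} [TopologicalSpace K'] [TopologicalSpace K]

/-- The points of `K` having an open neighbourhood homeomorphic to `ℝ^d`. -/
def euclideanPoints (K : Type*) [TopologicalSpace K] (d : ℕ) : Set K :=
  {x | ∃ U : Set K, IsOpen U ∧ Nonempty (U ≃ₜ (Fin d → ℝ)) ∧ x ∈ U}

/-- `C` is the closure of a component of the set of points of `K` that are locally `ℝ^d`. This
describes the cells of a cell complex by the topology of `K` alone. -/
def IsMaximalCell (d : ℕ) (C : Set K) : Prop :=
  ∃ x ∈ euclideanPoints K d, C = closure (connectedComponentIn (euclideanPoints K d) x)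

lemma map_mem_euclideanPoints (h : K ≃ₜ K') {d : ℕ} {x : K} (hx : x ∈ euclideanPoints K d) :
    h x ∈ euclideanPoints K' d := by
  obtain ⟨U, hU, ⟨e⟩, hx⟩ := hx
  exact ⟨h '' U, h.isOpenMap U hU, ⟨(h.image U).symm.trans e⟩, mem_image_of_mem h hx⟩

lemma image_euclideanPoints (h : K ≃ₜ K') (d : ℕ) :
    h '' euclideanPoints K d = euclideanPoints K' d :=
  Subset.antisymm (image_subset_iff.2 fun _ => map_mem_euclideanPoints h) fun y hy =>
    ⟨h.symm y, map_mem_euclideanPoints h.symm hy, h.apply_symm_apply y⟩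

lemma IsMaximalCell.image {d : ℕ} {C : Set K} (hC : IsMaximalCell d C) (h : K ≃ₜ K') :
    IsMaximalCell d (h '' C) := by
  obtain ⟨x, hx, rfl⟩ := hC
  refine ⟨h x, map_mem_euclideanPoints h hx, ?_⟩
  rw [h.image_closure, h.image_connectedComponentIn hx, image_euclideanPoints]

/-- The set `cell i` is the closure of an open chart of dimension `d i` disjoint from the other
cells, the cells cover `K`, and a point of several cells lies in cells of different dimensions. -/
structure IsCellComplex (cell : ι → Set K) (d : ι → ℕ) : Prop where
  isClosed : ∀ i, IsClosed (cell i)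
  chart : ∀ i, ∃ U : Set K, IsOpen U ∧ Nonempty (U ≃ₜ (Fin (d i) → ℝ)) ∧ U ⊆ cell i ∧
    cell i ⊆ closure U ∧ ∀ j, (U ∩ cell j).Nonempty → j = i
  cover : ∀ x, ∃ i, x ∈ cell i
  separated : ∀ i j x, x ∈ cell i → x ∈ cell j → i ≠ j →
    ∃ k l, x ∈ cell k ∧ x ∈ cell l ∧ d k ≠ d l

namespace IsCellComplex

variable {cell : ι → Set K} {d : ι → ℕ} {cell' : ι' → Set K'} {d' : ι' → ℕ}

lemma injective (H : IsCellComplex cell d) : Function.Injective cell := by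
  intro i j hij
  obtain ⟨U, -, ⟨e⟩, hU, -, hj⟩ := H.chart i
  exact (hj j ⟨e.symm 0, (e.symm 0).2, hij ▸ hU (e.symm 0).2⟩).symm

lemma dim_eq (H : IsCellComplex cell d) {n : ℕ} {x : K} (hx : x ∈ euclideanPoints K n) {i : ι}
    (hi : x ∈ cell i) : d i = n := by
  obtain ⟨V, hV, ⟨e'⟩, hxV⟩ := hx
  obtain ⟨U, hU, ⟨e⟩, -, hcl, -⟩ := H.chart i
  obtain ⟨y, hyV, hyU⟩ := mem_closure_iff.1 (hcl hi) V hV hxV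
  exact chart_dim_eq hU hV e e' ⟨y, hyU, hyV⟩

lemma eq_of_mem_euclideanPoints (H : IsCellComplex cell d) {n : ℕ} {x : K}
    (hx : x ∈ euclideanPoints K n) {i j : ι} (hi : x ∈ cell i) (hj : x ∈ cell j) : i = j := by
  by_contra hne
  obtain ⟨k, l, hk, hl, hkl⟩ := H.separated i j x hi hj hne
  exact hkl ((H.dim_eq hx hk).trans (H.dim_eq hx hl).symm)

lemma connectedComponentIn_subset_cell [Finite ι] (H : IsCellComplex cell d) {n : ℕ} {x : K}
    (hx : x ∈ euclideanPoints K n) {i : ι} (hi : x ∈ cell i) :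
    connectedComponentIn (euclideanPoints K n) x ⊆ cell i := by
  set C := connectedComponentIn (euclideanPoints K n) x
  have cover : C ⊆ cell i ∪ ⋃ j : {j // j ≠ i}, cell j := fun y _ => by
    obtain ⟨j, hj⟩ := H.cover y
    by_cases hji : j = i
    · exact Or.inl (hji ▸ hj)
    · exact Or.inr (mem_iUnion.2 ⟨⟨j, hji⟩, hj⟩)
  have disjoint : C ∩ (cell i ∩ ⋃ j : {j // j ≠ i}, cell j) = ∅ := by
    refine eq_empty_of_forall_notMem fun y ⟨hy, hyi, hyj⟩ => ?_
    obtain ⟨⟨j, hj⟩, hyj⟩ := mem_iUnion.1 hyj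
    exact hj (H.eq_of_mem_euclideanPoints (connectedComponentIn_subset _ _ hy) hyj hyi)
  have others_closed : IsClosed (⋃ j : {j // j ≠ i}, cell j) :=
    isClosed_iUnion_of_finite fun j => H.isClosed j
  refine (isPreconnected_iff_subset_of_disjoint_closed.1 isPreconnected_connectedComponentIn
    _ _ (H.isClosed i) others_closed cover disjoint).resolve_right fun h => ?_
  obtain ⟨⟨j, hj⟩, hxj⟩ := mem_iUnion.1 (h (mem_connectedComponentIn hx))
  exact hj (H.eq_of_mem_euclideanPoints hx hxj hi)

lemma closure_connectedComponentIn [Finite ι] (H : IsCellComplex cell d) {n : ℕ} {x : K}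
    (hx : x ∈ euclideanPoints K n) {i : ι} (hi : x ∈ cell i) :
    closure (connectedComponentIn (euclideanPoints K n) x) = cell i := by
  obtain rfl := H.dim_eq hx hi
  obtain ⟨U, hU, ⟨e⟩, hUc, hcl, -⟩ := H.chart i
  have chart_subset : U ⊆ euclideanPoints K (d i) := fun y hy => ⟨U, hU, ⟨e⟩, hy⟩
  have chart_preconnected : IsPreconnected U := by
    rw [isPreconnected_iff_preconnectedSpace]
    exact e.symm.surjective.denseRange.preconnectedSpace e.symm.continuous
  have preconnected : IsPreconnected (euclideanPoints K (d i) ∩ cell i) :=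
    chart_preconnected.subset_closure (fun y hy => ⟨chart_subset hy, hUc hy⟩) fun y hy => hcl hy.2
  refine Subset.antisymm
    (closure_minimal (H.connectedComponentIn_subset_cell hx hi) (H.isClosed i))
    (hcl.trans (closure_mono fun y hy => ?_))
  exact preconnected.subset_connectedComponentIn ⟨hx, hi⟩ inter_subset_left
    ⟨chart_subset hy, hUc hy⟩

lemma isMaximalCell_iff [Finite ι] (H : IsCellComplex cell d) {n : ℕ} {C : Set K} :
    IsMaximalCell n C ↔ ∃ i, d i = n ∧ C = cell i := by
  constructor
  · rintro ⟨x, hx, rfl⟩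
    obtain ⟨i, hi⟩ := H.cover x
    exact ⟨i, H.dim_eq hx hi, H.closure_connectedComponentIn hx hi⟩
  · rintro ⟨i, rfl, rfl⟩
    obtain ⟨U, hU, ⟨e⟩, hUc, -, -⟩ := H.chart i
    have hy := (e.symm 0).2
    exact ⟨_, ⟨U, hU, ⟨e⟩, hy⟩, (H.closure_connectedComponentIn ⟨U, hU, ⟨e⟩, hy⟩ (hUc hy)).symm⟩

theorem exists_equiv [Finite ι] [Finite ι'] (H : IsCellComplex cell d)
    (H' : IsCellComplex cell' d') (h : K ≃ₜ K') :
    ∃ φ : ι ≃ ι', ∀ i, d' (φ i) = d i ∧ h '' cell i = cell' (φ i) := by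
  have image_eq_cell (i : ι) : ∃ j, d' j = d i ∧ h '' cell i = cell' j :=
    H'.isMaximalCell_iff.1 ((H.isMaximalCell_iff.2 ⟨i, rfl, rfl⟩).image h)
  have preimage_eq_cell (j : ι') : ∃ i, d i = d' j ∧ h.symm '' cell' j = cell i :=
    H.isMaximalCell_iff.1 ((H'.isMaximalCell_iff.2 ⟨j, rfl, rfl⟩).image h.symm)
  choose φ hφ using image_eq_cell
  choose ψ hψ using preimage_eq_cell
  refine ⟨⟨φ, ψ, fun i => H.injective ?_, fun j => H'.injective ?_⟩, hφ⟩
  · rw [← (hψ _).2, ← (hφ _).2, ← image_comp, h.symm_comp_self, image_id]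
  · rw [← (hφ _).2, ← (hψ _).2, ← image_comp, h.self_comp_symm, image_id]

end IsCellComplex

end CellComplex

/-! ### Rooted forests -/

/-- The order of a rooted forest: the elements below a given one form a chain. -/
def IsForestOrder (E : Type*) [PartialOrder E] : Prop :=
  ∀ a b c : E, a ≤ c → b ≤ c → a ≤ b ∨ b ≤ a

/-- Above every non-maximal element the forest branches. -/
def IsBranchingOrder (E : Type*) [PartialOrder E] : Prop :=
  ∀ a b : E, a < b → ∃ c, a < c ∧ ¬ b ≤ c ∧ ¬ c ≤ b

/-- The connected sets containing the root of a rooted forest with edges `E`, encoded by the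
function recording which initial portion of each edge they cover. -/
def rootedSets (E : Type*) [PartialOrder E] : Set (E → ℝ) :=
  {f | (∀ e, f e ∈ Icc (0 : ℝ) 1) ∧ ∀ a b, a < b → f b = 0 ∨ f a = 1}

section RootedCell

variable {E : Type*} [PartialOrder E] {Y Z : Set E} {f : E → ℝ}

/-- The rooted sets containing all edges in `Y` and only edges whose predecessors are in `Y`. -/
def rootedCell (Y : Set E) : Set (E → ℝ) :=
  {f | (∀ e, f e ∈ Icc (0 : ℝ) 1) ∧ (∀ y ∈ Y, f y = 1) ∧ ∀ a b, a < b → a ∉ Y → f b = 0}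

lemma mem_of_mem_rootedCell (hf : f ∈ rootedCell Y) {a b : E} (hab : a < b) (hb : f b ≠ 0) :
    a ∈ Y :=
  not_imp_comm.1 (hf.2.2 a b hab) hb

lemma rootedCell_subset_rootedSets : rootedCell Y ⊆ rootedSets E :=
  fun _ hf => ⟨hf.1, fun _ _ hab =>
    or_iff_not_imp_left.2 fun hb => hf.2.1 _ (mem_of_mem_rootedCell hf hab hb)⟩

lemma mem_rootedCell_inter (hY : f ∈ rootedCell Y) (hZ : f ∈ rootedCell Z) :
    f ∈ rootedCell (Y ∩ Z) :=
  ⟨hY.1, fun y hy => hY.2.1 y hy.1, fun a b hab ha =>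
    (not_and_or.1 ha).elim (hY.2.2 a b hab) (hZ.2.2 a b hab)⟩

lemma isClosed_rootedCell (Y : Set E) : IsClosed (rootedCell Y) := by
  simp only [rootedCell, ofPred_and, ofPred_forall]
  refine (isClosed_iInter fun e => isClosed_Icc.preimage (continuous_apply e)).inter
    ((isClosed_biInter fun y _ => ?_).inter (isClosed_iInter fun a => isClosed_iInter fun b =>
      isClosed_iInter fun _ => isClosed_iInter fun _ => ?_))
  · exact isClosed_eq (continuous_apply y) continuous_const
  · exact isClosed_eq (continuous_apply b) continuous_const

end RootedCell

section OuterFront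

variable {E : Type*} [PartialOrder E]

/-- The minimal elements outside `Y`; for a lower set `Y` of edges, the edges growing out
of `Y`. -/
def outerFront (Y : Set E) : Set E := {e | (∀ a < e, a ∈ Y) ∧ e ∉ Y}

lemma eq_of_mem_outerFront {Y : Set E} {m n : E} (hm : m ∈ outerFront Y) (hn : n ∈ outerFront Y)
    (h : m ≤ n ∨ n ≤ m) : m = n := by
  rcases h with h | h
  · exact h.eq_or_lt.resolve_right fun h => hm.2 (hn.1 m h)
  · exact (h.eq_or_lt.resolve_right fun h => hn.2 (hm.1 n h)).symm

variable [Finite E]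

lemma exists_outerFront_le {Y : Set E} {a : E} (ha : a ∉ Y) : ∃ n ∈ outerFront Y, n ≤ a := by
  obtain ⟨n, hn⟩ := (toFinite {e | e ∉ Y ∧ e ≤ a}).exists_minimal ⟨a, ha, le_rfl⟩
  refine ⟨n, ⟨fun b hb => ?_, hn.prop.1⟩, hn.prop.2⟩
  by_contra hbY
  exact hb.not_ge (hn.le_of_le ⟨hbY, hb.le.trans hn.prop.2⟩ hb.le)

variable {Y Z : Set E}

lemma exists_outerFront_between (hE : IsForestOrder E) (hY : IsLowerSet Y) {y c : E} (hy : y ∈ Y)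
    (hyc : y < c) (hc : c ∉ Y) : ∃ n ∈ outerFront Y, y < n ∧ n ≤ c := by
  obtain ⟨n, hn, hnc⟩ := exists_outerFront_le hc
  refine ⟨n, hn, ?_, hnc⟩
  rcases hE y n c hyc.le hnc with h | h
  · exact h.lt_of_ne fun h => hn.2 (h ▸ hy)
  · exact absurd (hY h hy) hn.2

lemma exists_outerFront_gt (hE : IsForestOrder E) (hY : IsLowerSet Y)
    (hmax : ∀ y ∈ Y, ¬ IsMax y) {y : E} (hy : y ∈ Y) : ∃ n ∈ outerFront Y, y < n := by
  obtain ⟨m, hym, hm⟩ := (finite_univ (α := E)).exists_le_maximal (mem_univ y)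
  have hmY : m ∉ Y := fun h => hmax m h fun b hb => hm.le_of_ge (mem_univ b) hb
  obtain ⟨n, hn, h, -⟩ := exists_outerFront_between hE hY hy
    (hym.lt_of_ne fun h => hmY (h ▸ hy)) hmY
  exact ⟨n, hn, h⟩

lemma exists_outerFront_gt_ne (hE : IsForestOrder E) (hB : IsBranchingOrder E)
    (hY : IsLowerSet Y) (hmax : ∀ y ∈ Y, ¬ IsMax y) {y n : E} (hy : y ∈ Y)
    (hyn : y < n) : ∃ m ∈ outerFront Y, y < m ∧ m ≠ n := by
  obtain ⟨c, hyc, hnc, hcn⟩ := hB y n hyn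
  by_cases hc : c ∈ Y
  · obtain ⟨m, hm, hcm⟩ := exists_outerFront_gt hE hY hmax hc
    exact ⟨m, hm, hyc.trans hcm, fun h => hcn (h ▸ hcm.le)⟩
  · obtain ⟨m, hm, hym, hmc⟩ := exists_outerFront_between hE hY hy hyc hc
    exact ⟨m, hm, hym, fun h => hnc (h ▸ hmc)⟩

lemma exists_outerFront_ge_of_subset (hE : IsForestOrder E) (hY : IsLowerSet Y)
    (hmax : ∀ y ∈ Y, ¬ IsMax y) (hZY : Z ⊆ Y) {n : E} (hn : n ∈ outerFront Z) :
    ∃ m ∈ outerFront Y, n ≤ m := by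
  by_cases hnY : n ∈ Y
  · obtain ⟨m, hm, h⟩ := exists_outerFront_gt hE hY hmax hnY
    exact ⟨m, hm, h.le⟩
  · exact ⟨n, ⟨fun a ha => hZY (hn.1 a ha), hnY⟩, le_rfl⟩

-- Every edge growing out of `Z` continues to an edge growing out of `Y`, and since the forest
-- branches, one in `Y` continues to two of them.
lemma ncard_outerFront_lt (hE : IsForestOrder E) (hB : IsBranchingOrder E)
    (hY : IsLowerSet Y) (hmax : ∀ y ∈ Y, ¬ IsMax y) (hZY : Z ⊂ Y) :
    (outerFront Z).ncard < (outerFront Y).ncard := by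
  choose! g hg hle using fun n hn => exists_outerFront_ge_of_subset hE hY hmax hZY.1 (n := n) hn
  have eq_of_le_g {m n : E} (hm : m ∈ outerFront Z) (hn : n ∈ outerFront Z) (h : m ≤ g n) :
      m = n := eq_of_mem_outerFront hm hn (hE m n _ h (hle n hn))
  have g_injOn : InjOn g (outerFront Z) := fun m hm n hn h => eq_of_le_g hm hn (h ▸ hle m hm)
  rw [← g_injOn.ncard_image]
  refine ncard_lt_ncard ⟨image_subset_iff.2 hg, fun hsub => ?_⟩
  obtain ⟨y, hyY, hyZ⟩ := exists_of_ssubset hZY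
  obtain ⟨n, hn, hny⟩ := exists_outerFront_le hyZ
  have hnY : n ∈ Y := hY hny hyY
  obtain ⟨m, hm, hnm, hne⟩ := exists_outerFront_gt_ne hE hB hY hmax hnY
    ((hle n hn).lt_of_ne fun h => (hg n hn).2 (h ▸ hnY))
  obtain ⟨k, hk, rfl⟩ := hsub hm
  exact hne (congrArg g (eq_of_le_g hn hk hnm.le).symm)

end OuterFront

section Charts

variable {E : Type*} [PartialOrder E] {Y : Set E}

/-- The rooted sets ending in the interior of each of the edges growing out of `Y`. -/
def rootedChart (Y : Set E) : Set (rootedSets E) :=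
  {f | ∀ n ∈ outerFront Y, f.1 n ∈ Ioo (0 : ℝ) 1}

lemma isOpen_rootedChart [Finite E] (Y : Set E) : IsOpen (rootedChart Y) := by
  simp only [rootedChart, ofPred_forall]
  exact isOpen_iInter_of_finite fun n => isOpen_iInter_of_finite fun _ =>
    isOpen_Ioo.preimage ((continuous_apply n).comp continuous_subtype_val)

open Classical in
/-- The function which is `1` on `Y`, is `g` on the outer front of `Y` and vanishes elsewhere. -/
noncomputable def extendFront (Y : Set E) (g : outerFront Y → ℝ) (e : E) : ℝ :=
  if e ∈ Y then 1 else if h : e ∈ outerFront Y then g ⟨e, h⟩ else 0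

lemma extendFront_of_mem (g : outerFront Y → ℝ) {e : E} (he : e ∈ Y) : extendFront Y g e = 1 :=
  if_pos he

lemma extendFront_of_mem_outerFront (g : outerFront Y → ℝ) {n : E} (hn : n ∈ outerFront Y) :
    extendFront Y g n = g ⟨n, hn⟩ := by
  rw [extendFront, if_neg hn.2, dif_pos hn]

lemma extendFront_of_notMem (g : outerFront Y → ℝ) {e : E} (he : e ∉ Y)
    (he' : e ∉ outerFront Y) : extendFront Y g e = 0 := by
  rw [extendFront, if_neg he, dif_neg he']

lemma continuous_extendFront (Y : Set E) : Continuous (extendFront Y) := by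
  refine continuous_pi fun e => ?_
  unfold extendFront
  split_ifs
  · exact continuous_const
  · exact continuous_apply _
  · exact continuous_const

lemma extendFront_mem_rootedCell (hY : IsLowerSet Y) {g : outerFront Y → ℝ}
    (hg : ∀ n, g n ∈ Icc (0 : ℝ) 1) : extendFront Y g ∈ rootedCell Y := by
  refine ⟨fun e => ?_, fun y => extendFront_of_mem g, fun a b hab ha => ?_⟩
  · unfold extendFront
    split_ifs
    exacts [right_mem_Icc.2 zero_le_one, hg _, left_mem_Icc.2 zero_le_one]
  · exact extendFront_of_notMem g (fun hb => ha (hY hab.le hb)) fun hb => ha (hb.1 a hab)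

lemma extendFront_restrict {f : E → ℝ} (hf : f ∈ rootedCell Y) :
    extendFront Y (fun n => f n) = f := by
  ext e
  by_cases he : e ∈ Y
  · rw [hf.2.1 e he, extendFront_of_mem _ he]
  by_cases he' : e ∈ outerFront Y
  · exact extendFront_of_mem_outerFront _ he'
  rw [extendFront_of_notMem _ he he']
  by_contra h0
  exact he' ⟨fun a ha => mem_of_mem_rootedCell hf ha (Ne.symm h0), he⟩

lemma lineMap_half_mem_Ioo {x t : ℝ} (hx : x ∈ Icc (0 : ℝ) 1) (ht : t ∈ Ioc (0 : ℝ) 1) :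
    AffineMap.lineMap x (1 / 2) t ∈ Ioo (0 : ℝ) 1 := by
  rw [AffineMap.lineMap_apply_ring']
  constructor <;> nlinarith [hx.1, hx.2, ht.1, ht.2]

lemma subset_closure_rootedChart (hY : IsLowerSet Y) {f : rootedSets E}
    (hf : f.1 ∈ rootedCell Y) : f ∈ closure (rootedChart Y) := by
  let move (t : ℝ) : outerFront Y → ℝ := fun n => AffineMap.lineMap (f.1 n) (1 / 2) t
  have move_zero : extendFront Y (move 0) = f.1 := by
    simpa only [move, AffineMap.lineMap_apply_zero] using extendFront_restrict hf
  have move_mem_Ioo {t : ℝ} (ht : t ∈ Ioc (0 : ℝ) 1) (n : outerFront Y) :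
      move t n ∈ Ioo (0 : ℝ) 1 := lineMap_half_mem_Ioo (hf.1 n) ht
  have move_mem (t : Icc (0 : ℝ) 1) : extendFront Y (move t) ∈ rootedSets E := by
    rcases t.2.1.eq_or_lt with h | h
    · rw [← h, move_zero]
      exact f.2
    · exact rootedCell_subset_rootedSets (extendFront_mem_rootedCell hY fun n =>
        Ioo_subset_Icc_self (move_mem_Ioo ⟨h, t.2.2⟩ n))
  let path (t : Icc (0 : ℝ) 1) : rootedSets E := ⟨extendFront Y (move t), move_mem t⟩
  have continuous_path : Continuous path :=
    ((continuous_extendFront Y).comp (by fun_prop)).subtype_mk _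
  have path_zero : path 0 = f := Subtype.ext move_zero
  have zero_mem_closure : (0 : Icc (0 : ℝ) 1) ∈ closure (Ioi 0) := by
    rw [closure_Ioi' ⟨1, zero_lt_one⟩]
    exact self_mem_Ici
  rw [← path_zero]
  refine map_mem_closure continuous_path zero_mem_closure fun t ht n hn => ?_
  exact mem_of_eq_of_mem (extendFront_of_mem_outerFront _ hn) (move_mem_Ioo ⟨ht, t.2.2⟩ ⟨n, hn⟩)

variable [Finite E]

lemma mem_rootedCell_of_mem_rootedChart (hE : IsForestOrder E) (hY : IsLowerSet Y)
    (hmax : ∀ y ∈ Y, ¬ IsMax y) {f : rootedSets E} (hf : f ∈ rootedChart Y) :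
    f.1 ∈ rootedCell Y := by
  refine ⟨f.2.1, fun y hy => ?_, fun a b hab ha => ?_⟩
  · obtain ⟨n, hn, hyn⟩ := exists_outerFront_gt hE hY hmax hy
    exact (f.2.2 y n hyn).resolve_left (hf n hn).1.ne'
  · obtain ⟨n, hn, hna⟩ := exists_outerFront_le ha
    exact (f.2.2 n b (hna.trans_lt hab)).resolve_right (hf n hn).2.ne

/-- The values on the outer front are coordinates on the chart of `Y`. -/
noncomputable def rootedChartHomeomorph (hE : IsForestOrder E) (hY : IsLowerSet Y)
    (hmax : ∀ y ∈ Y, ¬ IsMax y) : rootedChart Y ≃ₜ (outerFront Y → Ioo (0 : ℝ) 1) where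
  toFun f n := ⟨f.1.1 n, f.2 n n.2⟩
  invFun g := ⟨⟨extendFront Y fun n => g n, rootedCell_subset_rootedSets
      (extendFront_mem_rootedCell hY fun n => Ioo_subset_Icc_self (g n).2)⟩,
    fun n hn => mem_of_eq_of_mem (extendFront_of_mem_outerFront (fun n => (g n : ℝ)) hn)
      (g ⟨n, hn⟩).2⟩
  left_inv f := Subtype.ext (Subtype.ext
    (extendFront_restrict (mem_rootedCell_of_mem_rootedChart hE hY hmax f.2)))
  right_inv g := funext fun n => Subtype.ext
    (extendFront_of_mem_outerFront (fun n => (g n : ℝ)) n.2)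
  continuous_toFun := continuous_pi fun n => ((continuous_apply n.1).comp
    (continuous_subtype_val.comp continuous_subtype_val)).subtype_mk _
  continuous_invFun :=
    (((continuous_extendFront Y).comp (by fun_prop)).subtype_mk _).subtype_mk _

lemma nonempty_rootedChart_homeomorph (hE : IsForestOrder E) (hY : IsLowerSet Y)
    (hmax : ∀ y ∈ Y, ¬ IsMax y) :
    Nonempty (rootedChart Y ≃ₜ (Fin (outerFront Y).ncard → ℝ)) := by
  let unitInterval_homeomorph : Ioo (0 : ℝ) 1 ≃ₜ ℝ := (Real.sigmoid_strictMono.orderIso.trans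
    (OrderIso.setCongr _ _ Real.range_sigmoid)).toHomeomorph.symm
  exact ⟨((rootedChartHomeomorph hE hY hmax).trans
    (Homeomorph.piCongrRight fun _ => unitInterval_homeomorph)).trans
    (Homeomorph.piCongrLeft (Y := fun _ => ℝ) (Finite.equivFin (outerFront Y)))⟩

end Charts

section LatticeCell

variable {E : Type*} [PartialOrder E]

/-- A lower set of non-maximal elements, seen as a subset of the whole order. -/
def innerSet (Y : LowerSet {e : E // ¬ IsMax e}) : Set E :=
  Subtype.val '' (Y : Set {e : E // ¬ IsMax e})

lemma innerSet_subset {Y Z : LowerSet {e : E // ¬ IsMax e}} : innerSet Y ⊆ innerSet Z ↔ Y ≤ Z :=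
  image_subset_image_iff Subtype.val_injective

lemma isLowerSet_innerSet (Y : LowerSet {e : E // ¬ IsMax e}) : IsLowerSet (innerSet Y) := by
  rintro a b hba ⟨⟨a, ha⟩, haY, rfl⟩
  exact ⟨⟨b, fun hb => ha (hb.mono hba)⟩, Y.lower hba haY, rfl⟩

lemma not_isMax_of_mem_innerSet (Y : LowerSet {e : E // ¬ IsMax e}) :
    ∀ y ∈ innerSet Y, ¬ IsMax y := by
  rintro _ ⟨y, -, rfl⟩
  exact y.2

lemma innerSet_inf (Y Z : LowerSet {e : E // ¬ IsMax e}) :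
    innerSet (Y ⊓ Z) = innerSet Y ∩ innerSet Z :=
  image_inter Subtype.val_injective

/-- The cell of rooted sets attached to a lower set of non-maximal edges. -/
def latticeCell (Y : LowerSet {e : E // ¬ IsMax e}) : Set (rootedSets E) :=
  {f | f.1 ∈ rootedCell (innerSet Y)}

/-- The dimension of `latticeCell Y`: the number of edges growing out of `Y`. -/
noncomputable def cellDim (Y : LowerSet {e : E // ¬ IsMax e}) : ℕ := (outerFront (innerSet Y)).ncard

lemma cellDim_strictMono [Finite E] (hE : IsForestOrder E) (hB : IsBranchingOrder E) :
    StrictMono (cellDim (E := E)) := fun _ Z h =>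
  ncard_outerFront_lt hE hB (isLowerSet_innerSet Z) (not_isMax_of_mem_innerSet Z)
    ⟨innerSet_subset.2 h.le, fun h' => h.not_ge (innerSet_subset.1 h')⟩

variable {Y Z : LowerSet {e : E // ¬ IsMax e}}

lemma mem_latticeCell_inf {f : rootedSets E} (hY : f ∈ latticeCell Y) (hZ : f ∈ latticeCell Z) :
    f ∈ latticeCell (Y ⊓ Z) := by
  simp only [latticeCell, innerSet_inf]
  exact mem_rootedCell_inter hY hZ

lemma exists_mem_latticeCell (f : rootedSets E) : ∃ Y, f ∈ latticeCell (E := E) Y := by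
  have eq_one_of_lt {a b : E} (hab : a < b) (hb : f.1 b ≠ 0) : f.1 a = 1 :=
    (f.2.2 a b hab).resolve_left hb
  let Y : LowerSet {e : E // ¬ IsMax e} := ⟨{e | f.1 e = 1}, fun a b hba (ha : f.1 a = 1) =>
    hba.eq_or_lt.elim (fun h => h ▸ ha) fun h => eq_one_of_lt h (ha ▸ one_ne_zero)⟩
  refine ⟨Y, f.2.1, ?_, fun a b hab ha => ?_⟩
  · rintro _ ⟨y, hy, rfl⟩
    exact hy
  · by_contra hb
    exact ha ⟨⟨a, hab.not_isMax⟩, eq_one_of_lt hab hb, rfl⟩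

variable [Finite E]

lemma eq_of_mem_rootedChart_of_mem_latticeCell (hE : IsForestOrder E) {f : rootedSets E}
    (hfY : f ∈ rootedChart (innerSet Y)) (hfZ : f ∈ latticeCell Z) : Z = Y := by
  refine le_antisymm (innerSet_subset.1 fun z hz => ?_) (innerSet_subset.1 fun y hy => ?_)
  · by_contra hzY
    obtain ⟨n, hn, hnz⟩ := exists_outerFront_le hzY
    exact (hfY n hn).2.ne (hfZ.2.1 n (isLowerSet_innerSet Z hnz hz))
  · obtain ⟨n, hn, hyn⟩ := exists_outerFront_gt hE (isLowerSet_innerSet Y)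
      (not_isMax_of_mem_innerSet Y) hy
    exact mem_of_mem_rootedCell hfZ hyn (hfY n hn).1.ne'

theorem isCellComplex_latticeCell (hE : IsForestOrder E) (hB : IsBranchingOrder E) :
    IsCellComplex (latticeCell (E := E)) cellDim where
  isClosed Y := (isClosed_rootedCell _).preimage continuous_subtype_val
  chart Y :=
    have hlow := isLowerSet_innerSet Y
    have hmax := not_isMax_of_mem_innerSet Y
    ⟨rootedChart (innerSet Y), isOpen_rootedChart _, nonempty_rootedChart_homeomorph hE hlow hmax,
      fun _ => mem_rootedCell_of_mem_rootedChart hE hlow hmax,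
      fun _ => subset_closure_rootedChart hlow,
      fun _ ⟨_, hfY, hfZ⟩ => eq_of_mem_rootedChart_of_mem_latticeCell hE hfY hfZ⟩
  cover := exists_mem_latticeCell
  separated Y Z f hY hZ hne := by
    have hmono := cellDim_strictMono hE hB
    have hinf := mem_latticeCell_inf hY hZ
    by_cases h : Y ⊓ Z = Y
    · have h' : Y ⊓ Z ≠ Z := fun h' => hne (h.symm.trans h')
      exact ⟨_, Z, hinf, hZ, (hmono (inf_le_right.lt_of_ne h')).ne⟩
    · exact ⟨_, Y, hinf, hY, (hmono (inf_le_left.lt_of_ne h)).ne⟩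

end LatticeCell

section FiberCounting

lemma eq_of_sum_Iic_eq {L M : Type*} [PartialOrder L] [LocallyFiniteOrderBot L] [WellFoundedLT L]
    [AddCancelCommMonoid M] {f g : L → M}
    (h : ∀ z, ∑ w ∈ Finset.Iic z, f w = ∑ w ∈ Finset.Iic z, g w) : f = g := by
  classical
  ext z
  induction z using WellFoundedLT.induction with
  | ind z ih =>
    have hz := h z
    rw [← Finset.Iio_insert, Finset.sum_insert (by simp), Finset.sum_insert (by simp),
      Finset.sum_congr rfl fun w hw => ih w (Finset.mem_Iio.1 hw)] at hz
    exact add_right_cancel hz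

variable {A B L : Type*} [Finite A]

lemma card_le_eq_sum_card_eq [PartialOrder L] [LocallyFiniteOrderBot L] (f : A → L) (z : L) :
    Nat.card {a // f a ≤ z} = ∑ w ∈ Finset.Iic z, Nat.card {a // f a = w} := by
  classical
  have := Fintype.ofFinite A
  simp only [Nat.card_eq_fintype_card, Fintype.card_subtype]
  rw [Finset.card_eq_sum_card_fiberwise (f := f) (t := Finset.Iic z) fun a ha => by simpa using ha]
  refine Finset.sum_congr rfl fun w hw => ?_
  rw [Finset.filter_filter]
  refine congrArg Finset.card (Finset.filter_congr fun a _ => and_iff_right_of_imp ?_)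
  rintro rfl
  exact Finset.mem_Iic.1 hw

lemma card_eq_add_card_not (p q : A → Prop) : Nat.card {a // q a} =
    Nat.card {a : {a // p a} // q a} + Nat.card {a : {a // ¬ p a} // q a} := by
  rw [Nat.card_congr (Equiv.subtypeSubtypeEquivSubtypeInter p q),
    Nat.card_congr (Equiv.subtypeSubtypeEquivSubtypeInter (fun a => ¬ p a) q)]
  simp only [and_comm (b := q _)]
  exact (ncard_inter_add_ncard_sdiff_eq_ncard {a | q a} {a | p a}).symm

variable [Finite B]

lemma card_eq_of_card_le_eq [Finite L] [PartialOrder L] {f : A → L} {g : B → L}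
    (h : ∀ z, Nat.card {a // f a ≤ z} = Nat.card {b // g b ≤ z}) (z : L) :
    Nat.card {a // f a = z} = Nat.card {b // g b = z} := by
  classical
  have := Fintype.ofFinite L
  let : LocallyFiniteOrderBot L := LocallyFiniteOrderBot.ofIic' L
    (fun a => Finset.univ.filter (· ≤ a)) (by simp)
  simp only [card_le_eq_sum_card_eq] at h
  exact congrFun (eq_of_sum_Iic_eq h) z

lemma exists_equiv_comp_eq {f : A → L} {g : B → L}
    (h : ∀ z, Nat.card {a // f a = z} = Nat.card {b // g b = z}) :
    ∃ e : A ≃ B, ∀ a, g (e a) = f a := by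
  let e : ∀ z, {a // f a = z} ≃ {b // g b = z} := fun z => (Finite.card_eq.1 (h z)).some
  exact ⟨((Equiv.sigmaFiberEquiv f).symm.trans (Equiv.sigmaCongrRight e)).trans
    (Equiv.sigmaFiberEquiv g), fun a => (e (f a) ⟨a, rfl⟩).2⟩

lemma exists_equiv_extend_comp_eq {f : A → L} {g : B → L}
    (h : ∀ z, Nat.card {a // f a = z} = Nat.card {b // g b = z}) {p : A → Prop} {q : B → Prop}
    (ψ : {a // p a} ≃ {b // q b}) (hψ : ∀ a, g (ψ a) = f a) :
    ∃ ω : A ≃ B, (∀ a, g (ω a) = f a) ∧ ∀ a : {a // p a}, ω a = ψ a := by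
  classical
  have card_not (z : L) : Nat.card {a : {a // ¬ p a} // f a = z} =
      Nat.card {b : {b // ¬ q b} // g b = z} := by
    have card_ψ : Nat.card {a : {a // p a} // f a = z} = Nat.card {b : {b // q b} // g b = z} :=
      Nat.card_congr (ψ.subtypeEquiv fun a => by rw [hψ])
    have hz := h z
    rw [card_eq_add_card_not p, card_eq_add_card_not q, card_ψ] at hz
    exact Nat.add_left_cancel hz
  obtain ⟨χ, hχ⟩ := exists_equiv_comp_eq card_not
  let ω : A ≃ B := (Equiv.sumCompl p).symm.trans ((Equiv.sumCongr ψ χ).trans (Equiv.sumCompl q))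
  have ω_pos (a : {a // p a}) : ω a = ψ a := by
    simp [ω, Equiv.sumCompl_symm_apply_of_pos a.2]
  have ω_neg (a : {a // ¬ p a}) : ω a = χ a := by
    simp [ω, Equiv.sumCompl_symm_apply_of_neg a.2]
  refine ⟨ω, fun a => ?_, ω_pos⟩
  by_cases ha : p a
  · rw [ω_pos ⟨a, ha⟩, hψ]
  · rw [ω_neg ⟨a, ha⟩, hχ]

end FiberCounting

section LowerSet

variable {P Q : Type*} [PartialOrder P] [PartialOrder Q]

lemma supIrred_map {α β : Type*} [SemilatticeSup α] [SemilatticeSup β] {a : α}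
    (ha : SupIrred a) (Φ : α ≃o β) : SupIrred (Φ a) := by
  refine ⟨fun h => ha.1 (Φ.isMin_apply.1 h), fun b c hbc => ?_⟩
  have := @ha.2 (Φ.symm b) (Φ.symm c) (by rw [← map_sup, hbc, Φ.symm_apply_apply])
  simpa only [OrderIso.symm_apply_eq] using this

lemma exists_Iic_eq_orderIso_Iic [Finite Q] (Φ : LowerSet P ≃o LowerSet Q) (v : P) :
    ∃ w, LowerSet.Iic w = Φ (LowerSet.Iic v) :=
  LowerSet.supIrred_iff_of_finite.1 (supIrred_map (LowerSet.supIrred_Iic v) Φ)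

lemma exists_orderIso_mem_iff [Finite P] [Finite Q] (Φ : LowerSet P ≃o LowerSet Q) :
    ∃ ψ : P ≃o Q, ∀ Y v, ψ v ∈ Φ Y ↔ v ∈ Y := by
  choose ψ hψ using exists_Iic_eq_orderIso_Iic Φ
  choose χ hχ using exists_Iic_eq_orderIso_Iic Φ.symm
  have mem_iff (Y : LowerSet P) (v : P) : ψ v ∈ Φ Y ↔ v ∈ Y := by
    rw [← LowerSet.Iic_le, hψ, Φ.le_iff_le, LowerSet.Iic_le]
  refine ⟨⟨⟨ψ, χ, fun v => LowerSet.Iic_injective ?_, fun w => LowerSet.Iic_injective ?_⟩,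
    fun {a b} => ?_⟩, mem_iff⟩
  · rw [hχ, hψ, Φ.symm_apply_apply]
  · rw [hψ, hχ, Φ.apply_symm_apply]
  · exact LowerSet.mem_Iic_iff.symm.trans ((hψ b ▸ mem_iff (LowerSet.Iic b) a).trans
      LowerSet.mem_Iic_iff)

lemma mem_of_covBy_of_lt {Y Z : LowerSet P} (h : Y ⋖ Z) {a b : P} (hab : a < b) (hb : b ∈ Z) :
    a ∈ Y := by
  by_contra ha
  rcases h.eq_or_eq le_sup_left (sup_le h.le (LowerSet.Iic_le.2 (Z.lower hab.le hb))) with h' | h'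
  · exact ha (LowerSet.Iic_le.1 (sup_eq_left.1 h'))
  · rw [← h', LowerSet.mem_sup_iff] at hb
    exact hb.elim (fun hb => ha (Y.lower hab.le hb)) fun hba => hab.not_ge hba

end LowerSet

section Rigidity

variable {E F : Type*} [PartialOrder E] [PartialOrder F]

lemma innerSet_subset_union_outerFront_of_covBy {Y Z : LowerSet {e : E // ¬ IsMax e}}
    (h : Y ⋖ Z) : innerSet Z ⊆ innerSet Y ∪ outerFront (innerSet Y) := by
  rintro _ ⟨z, hz, rfl⟩
  refine or_iff_not_imp_left.2 fun hzY => ⟨fun a ha => ?_, hzY⟩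
  exact ⟨⟨a, ha.not_isMax⟩, mem_of_covBy_of_lt h (b := z) ha hz, rfl⟩

lemma exists_mem_latticeCell_iff_of_covBy [Finite E] (hE : IsForestOrder E)
    {Y Z : LowerSet {e : E // ¬ IsMax e}} (h : Y ⋖ Z) :
    ∃ f : rootedSets E, ∀ W, f ∈ latticeCell W ↔ W = Y ∨ W = Z := by
  classical
  let g (n : outerFront (innerSet Y)) : ℝ := if n.1 ∈ innerSet Z then 1 else 1 / 2
  have g_mem (n : outerFront (innerSet Y)) : g n ∈ Ioc (0 : ℝ) 1 := by
    simp only [g]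
    split_ifs <;> norm_num
  let f := extendFront (innerSet Y) g
  have f_mem : f ∈ rootedCell (innerSet Y) :=
    extendFront_mem_rootedCell (isLowerSet_innerSet Y) fun n => Ioc_subset_Icc_self (g_mem n)
  have f_ne_zero {n : E} (hn : n ∈ outerFront (innerSet Y)) : f n ≠ 0 := by
    simpa only [f, extendFront_of_mem_outerFront g hn] using (g_mem _).1.ne'
  have f_eq_one {e : E} (he : e ∈ innerSet Z) : f e = 1 := by
    rcases innerSet_subset_union_outerFront_of_covBy h he with he' | he'
    · exact extendFront_of_mem g he'
    · exact (extendFront_of_mem_outerFront g he').trans (if_pos he)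
  have mem_of_f_eq_one {e : E} (he : f e = 1) : e ∈ innerSet Z := by
    by_cases heY : e ∈ innerSet Y
    · exact innerSet_subset.2 h.le heY
    by_cases heF : e ∈ outerFront (innerSet Y)
    · by_contra heZ
      rw [show f e = 1 / 2 from (extendFront_of_mem_outerFront g heF).trans (if_neg heZ)] at he
      norm_num at he
    · exact absurd (he.symm.trans (extendFront_of_notMem g heY heF)) one_ne_zero
  refine ⟨⟨f, rootedCell_subset_rootedSets f_mem⟩, fun W => ⟨fun hW => ?_, ?_⟩⟩
  · refine h.eq_or_eq (innerSet_subset.1 fun y hy => ?_)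
      (innerSet_subset.1 fun w hw => mem_of_f_eq_one (hW.2.1 w hw))
    obtain ⟨n, hn, hyn⟩ := exists_outerFront_gt hE (isLowerSet_innerSet Y)
      (not_isMax_of_mem_innerSet Y) hy
    exact mem_of_mem_rootedCell hW hyn (f_ne_zero hn)
  · rintro (rfl | rfl)
    · exact f_mem
    · exact ⟨f_mem.1, fun _ => f_eq_one, fun a b hab ha =>
        f_mem.2.2 a b hab fun haY => ha (innerSet_subset.2 h.le haY)⟩

-- A point in exactly the two cells of a covering pair is sent to a point in exactly two cells,
-- one of which is their meet; the dimensions tell which one.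
lemma lt_of_covBy_of_image_latticeCell [Finite E] [Finite F] (hE : IsForestOrder E)
    (hEB : IsBranchingOrder E) (hF : IsForestOrder F) (hFB : IsBranchingOrder F)
    (h : rootedSets E ≃ₜ rootedSets F)
    (φ : LowerSet {e : E // ¬ IsMax e} ≃ LowerSet {e : F // ¬ IsMax e})
    (hφ : ∀ Y, cellDim (φ Y) = cellDim Y ∧ h '' latticeCell Y = latticeCell (φ Y))
    {Y Z : LowerSet {e : E // ¬ IsMax e}} (hc : Y ⋖ Z) : φ Y < φ Z := by
  obtain ⟨f, hf⟩ := exists_mem_latticeCell_iff_of_covBy hE hc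
  have mem_iff (W) : h f ∈ latticeCell (φ W) ↔ W = Y ∨ W = Z := by
    rw [← (hφ W).2, h.injective.mem_set_image, hf]
  have dim_lt : cellDim (φ Y) < cellDim (φ Z) := by
    rw [(hφ Y).1, (hφ Z).1]
    exact cellDim_strictMono hE hEB hc.lt
  have mem_inf := mem_latticeCell_inf ((mem_iff Y).2 (Or.inl rfl)) ((mem_iff Z).2 (Or.inr rfl))
  rw [← φ.apply_symm_apply (φ Y ⊓ φ Z), mem_iff, φ.symm_apply_eq, φ.symm_apply_eq] at mem_inf
  rcases mem_inf with inf_eq | inf_eq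
  · exact (inf_eq_left.1 inf_eq).lt_of_ne fun h => dim_lt.ne (by rw [h])
  · exact absurd ((cellDim_strictMono hF hFB).monotone (inf_eq_right.1 inf_eq)) dim_lt.not_ge

lemma monotone_of_image_latticeCell [Finite E] [Finite F] (hE : IsForestOrder E)
    (hEB : IsBranchingOrder E) (hF : IsForestOrder F) (hFB : IsBranchingOrder F)
    (h : rootedSets E ≃ₜ rootedSets F)
    (φ : LowerSet {e : E // ¬ IsMax e} ≃ LowerSet {e : F // ¬ IsMax e})
    (hφ : ∀ Y, cellDim (φ Y) = cellDim Y ∧ h '' latticeCell Y = latticeCell (φ Y)) :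
    Monotone φ := by
  classical
  have := Fintype.ofFinite (LowerSet {e : E // ¬ IsMax e})
  let := Fintype.toLocallyFiniteOrder (α := LowerSet {e : E // ¬ IsMax e})
  exact (monotone_iff_forall_covBy φ).2 fun Y Z hc =>
    (lt_of_covBy_of_image_latticeCell hE hEB hF hFB h φ hφ hc).le

/-- The elements strictly below `e`, as a lower set of non-maximal elements. -/
def lowerPart (e : E) : LowerSet {e : E // ¬ IsMax e} :=
  ⟨{v | v.1 < e}, fun _ _ hba ha => lt_of_le_of_lt (Subtype.coe_le_coe.2 hba) ha⟩

lemma mem_lowerPart {e : E} {v : {e : E // ¬ IsMax e}} : v ∈ lowerPart e ↔ v.1 < e := Iff.rfl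

lemma lowerPart_le_iff {e : E} {Y : LowerSet {e : E // ¬ IsMax e}} :
    lowerPart e ≤ Y ↔ e ∈ innerSet Y ∪ outerFront (innerSet Y) := by
  refine ⟨fun h => or_iff_not_imp_left.2 fun he => ⟨fun a ha => ?_, he⟩, fun h a ha => ?_⟩
  · exact ⟨⟨a, ha.not_isMax⟩, h ha, rfl⟩
  · refine Subtype.val_injective.mem_set_image.1 (?_ : a.1 ∈ innerSet Y)
    exact h.elim (fun he => isLowerSet_innerSet Y (le_of_lt ha) he) fun he => he.1 a ha

lemma card_lowerPart_le [Finite E] (Y : LowerSet {e : E // ¬ IsMax e}) :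
    Nat.card {e : E // lowerPart e ≤ Y} = (Y : Set {e : E // ¬ IsMax e}).ncard + cellDim Y :=
  calc Nat.card {e : E // lowerPart e ≤ Y}
      = (innerSet Y ∪ outerFront (innerSet Y)).ncard :=
        Nat.card_congr (Equiv.subtypeEquivRight fun _ => lowerPart_le_iff)
    _ = (innerSet Y).ncard + cellDim Y :=
        ncard_union_eq (disjoint_left.2 fun _ h h' => h'.2 h)
    _ = (Y : Set {e : E // ¬ IsMax e}).ncard + cellDim Y := by
        rw [innerSet, ncard_image_of_injective _ Subtype.val_injective]

variable {Φ : LowerSet {e : E // ¬ IsMax e} ≃o LowerSet {e : F // ¬ IsMax e}}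
  {ψ : {e : E // ¬ IsMax e} ≃o {e : F // ¬ IsMax e}}

lemma lowerPart_coe_orderIso (hψ : ∀ Y v, ψ v ∈ Φ Y ↔ v ∈ Y) (v : {e : E // ¬ IsMax e}) :
    lowerPart (ψ v).1 = Φ (lowerPart v.1) := by
  ext w
  obtain ⟨w, rfl⟩ := ψ.surjective w
  rw [SetLike.mem_coe, SetLike.mem_coe, hψ, mem_lowerPart, mem_lowerPart, Subtype.coe_lt_coe,
    Subtype.coe_lt_coe, ψ.lt_iff_lt]

lemma card_orderIso_lowerPart_le [Finite E] [Finite F] (hΦ : ∀ Y, cellDim (Φ Y) = cellDim Y)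
    (hψ : ∀ Y v, ψ v ∈ Φ Y ↔ v ∈ Y) (Y : LowerSet {e : F // ¬ IsMax e}) :
    Nat.card {e : E // Φ (lowerPart e) ≤ Y} = Nat.card {e : F // lowerPart e ≤ Y} := by
  obtain ⟨Y, rfl⟩ := Φ.surjective Y
  have coe_eq_image : (Φ Y : Set {e : F // ¬ IsMax e}) = ψ '' Y := by
    ext w
    obtain ⟨w, rfl⟩ := ψ.surjective w
    rw [SetLike.mem_coe, hψ, ψ.injective.mem_set_image, SetLike.mem_coe]
  simp only [Φ.le_iff_le]
  rw [card_lowerPart_le, card_lowerPart_le, hΦ, coe_eq_image,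
    ncard_image_of_injective _ ψ.injective]

lemma lt_iff_lt_of_lowerPart_eq (hψ : ∀ Y v, ψ v ∈ Φ Y ↔ v ∈ Y) {ω : E ≃ F}
    (hωψ : ∀ v : {e : E // ¬ IsMax e}, ω v = ψ v)
    (hω : ∀ e, lowerPart (ω e) = Φ (lowerPart e)) (a b : E) : ω a < ω b ↔ a < b := by
  have lt_iff (a : {e : E // ¬ IsMax e}) : ω a < ω b ↔ a.1 < b := by
    rw [hωψ, ← mem_lowerPart, hω, hψ, mem_lowerPart]
  by_cases ha : IsMax a
  · refine iff_of_false (fun hab => ?_) ha.not_lt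
    obtain ⟨v, hv⟩ := ψ.surjective ⟨ω a, hab.not_isMax⟩
    have hva : v.1 = a := ω.injective ((hωψ v).trans (congrArg Subtype.val hv))
    exact v.2 (hva ▸ ha)
  · exact lt_iff ⟨a, ha⟩

-- The isomorphism already matches the non-maximal elements; counting the elements over each
-- lower set, the maximal ones can be matched as well.
lemma exists_orderIso_of_cellDim [Finite E] [Finite F] (hΦ : ∀ Y, cellDim (Φ Y) = cellDim Y) :
    Nonempty (E ≃o F) := by
  obtain ⟨ψ, hψ⟩ := exists_orderIso_mem_iff Φ
  have card_fiber := card_eq_of_card_le_eq (card_orderIso_lowerPart_le hΦ hψ)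
  obtain ⟨ω, hω, hωψ⟩ :=
    exists_equiv_extend_comp_eq card_fiber ψ.toEquiv (lowerPart_coe_orderIso hψ)
  exact ⟨ω, fun {a b} => by rw [le_iff_eq_or_lt, le_iff_eq_or_lt, ω.injective.eq_iff,
    lt_iff_lt_of_lowerPart_eq hψ hωψ hω]⟩

theorem exists_orderIso_of_rootedSets_homeomorph [Finite E] [Finite F] (hE : IsForestOrder E)
    (hEB : IsBranchingOrder E) (hF : IsForestOrder F) (hFB : IsBranchingOrder F)
    (h : rootedSets E ≃ₜ rootedSets F) : Nonempty (E ≃o F) := by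
  obtain ⟨φ, hφ⟩ := (isCellComplex_latticeCell hE hEB).exists_equiv
    (isCellComplex_latticeCell hF hFB) h
  have symm_image (Z) : cellDim (φ.symm Z) = cellDim Z ∧
      h.symm '' latticeCell Z = latticeCell (φ.symm Z) := by
    obtain ⟨Y, rfl⟩ := φ.surjective Z
    rw [φ.symm_apply_apply, (hφ Y).1, ← (hφ Y).2, ← image_comp, h.symm_comp_self, image_id]
    exact ⟨rfl, rfl⟩
  exact exists_orderIso_of_cellDim (Φ := φ.toOrderIso
    (monotone_of_image_latticeCell hE hEB hF hFB h φ hφ)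
    (monotone_of_image_latticeCell hF hFB hE hEB h.symm φ.symm symm_image)) fun Y => (hφ Y).1

end Rigidity

/-! ### Subcontinua of trees -/

/-- The tree obtained by gluing the edges of a rooted forest at a root: its points are the rooted
sets that are arcs from the root. -/
def forestTree (E : Type*) [PartialOrder E] : Set (E → ℝ) :=
  {f | f ∈ rootedSets E ∧ ∀ a b, f a ≠ 0 → f b ≠ 0 → a ≤ b ∨ b ≤ a}

section ForestTree

variable {E : Type*} [PartialOrder E]

lemma isClosed_rootedSets : IsClosed (rootedSets E) := by
  simp only [rootedSets, ofPred_and, ofPred_forall, ofPred_or]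
  refine (isClosed_iInter fun e => isClosed_Icc.preimage (continuous_apply e)).inter
    (isClosed_iInter fun a => isClosed_iInter fun b => isClosed_iInter fun _ => ?_)
  exact (isClosed_eq (continuous_apply b) continuous_const).union
    (isClosed_eq (continuous_apply a) continuous_const)

lemma isCompact_rootedSets : IsCompact (rootedSets E) :=
  (isCompact_univ_pi fun _ : E => isCompact_Icc (a := (0 : ℝ)) (b := 1)).of_isClosed_subset
    isClosed_rootedSets fun _ hf e _ => hf.1 e

lemma isCompact_forestTree : IsCompact (forestTree E) := by
  have isClosed_comparable : IsClosed {f : E → ℝ | ∀ a b, f a = 0 ∨ f b = 0 ∨ a ≤ b ∨ b ≤ a} := by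
    simp only [ofPred_forall, ofPred_or]
    exact isClosed_iInter fun a => isClosed_iInter fun b =>
      (isClosed_eq (continuous_apply a) continuous_const).union
        ((isClosed_eq (continuous_apply b) continuous_const).union
          (isClosed_const.union isClosed_const))
  convert (isCompact_rootedSets (E := E)).inter_right isClosed_comparable using 1
  simp only [forestTree, ofPred_and, ofPred_mem_eq, ne_eq, or_iff_not_imp_left]

instance : CompactSpace (rootedSets E) := isCompact_iff_compactSpace.1 isCompact_rootedSets

instance : CompactSpace (forestTree E) := isCompact_iff_compactSpace.1 isCompact_forestTree

lemma zero_mem_forestTree : (0 : E → ℝ) ∈ forestTree E :=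
  ⟨⟨fun _ => left_mem_Icc.2 zero_le_one, fun _ _ _ => Or.inl rfl⟩, fun _ _ h => (h rfl).elim⟩

instance : Zero (forestTree E) := ⟨⟨0, zero_mem_forestTree⟩⟩

lemma forestTree_apply_eq_one (x : forestTree E) {a b : E} (hab : a < b) (hb : x.1 b ≠ 0) :
    x.1 a = 1 :=
  (x.2.1.2 a b hab).resolve_left hb

lemma min_mem_forestTree {f g : E → ℝ} (hf : f ∈ forestTree E) (hg : g ∈ rootedSets E) :
    (fun e => min (f e) (g e)) ∈ forestTree E := by
  have ne_zero_left {e : E} (he : min (f e) (g e) ≠ 0) : f e ≠ 0 := fun h =>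
    he ((congrArg (min · _) h).trans (min_eq_left (hg.1 e).1))
  refine ⟨⟨fun e => ⟨le_min (hf.1.1 e).1 (hg.1 e).1, min_le_of_left_le (hf.1.1 e).2⟩,
    fun a b hab => ?_⟩, fun a b ha hb => hf.2 a b (ne_zero_left ha) (ne_zero_left hb)⟩
  beta_reduce
  rcases hf.1.2 a b hab with hfb | hfa
  · exact Or.inl (by rw [hfb]; exact min_eq_left (hg.1 b).1)
  rcases hg.2 a b hab with hgb | hga
  · exact Or.inl (by rw [hgb]; exact min_eq_right (hf.1.1 b).1)
  · exact Or.inr (by rw [hfa, hga, min_self])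

/-- The point at which the arc from the root to `x` leaves the rooted set `g`. -/
noncomputable def truncate (g : rootedSets E) (x : forestTree E) : forestTree E :=
  ⟨fun e => min (x.1 e) (g.1 e), min_mem_forestTree x.2 g.2⟩

lemma continuous_truncate :
    Continuous fun z : rootedSets E × forestTree E => truncate z.1 z.2 := by
  refine Continuous.subtype_mk (continuous_pi fun e => ?_) _
  exact ((continuous_apply e).comp (continuous_subtype_val.comp continuous_snd)).min
    ((continuous_apply e).comp (continuous_subtype_val.comp continuous_fst))

/-- The rooted set encoded by `g`, as a set of points of the tree. -/
def rootedSubtree (g : rootedSets E) : Set (forestTree E) := {x | ∀ e, x.1 e ≤ g.1 e}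

lemma zero_mem_rootedSubtree (g : rootedSets E) : 0 ∈ rootedSubtree g := fun e => (g.2.1 e).1

lemma truncate_eq_self {g : rootedSets E} {x : forestTree E} (hx : x ∈ rootedSubtree g) :
    truncate g x = x :=
  Subtype.ext (funext fun e => min_eq_left (hx e))

lemma range_truncate (g : rootedSets E) : range (truncate g) = rootedSubtree g :=
  Subset.antisymm (range_subset_iff.2 fun _ _ => min_le_right _ _)
    fun x hx => ⟨x, truncate_eq_self hx⟩

section Height

variable [Finite E]

lemma height_mem_rootedSets (t : ℝ) :
    (fun e : E => max 0 (min 1 (t - (Iio e).ncard))) ∈ rootedSets E := by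
  refine ⟨fun e => ⟨le_max_left _ _, max_le zero_le_one (min_le_left _ _)⟩, fun a b hab => ?_⟩
  have ncard_lt : ((Iio a).ncard : ℝ) + 1 ≤ (Iio b).ncard := by
    exact_mod_cast Nat.succ_le_of_lt (ncard_lt_ncard (Iio_ssubset_Iio hab))
  beta_reduce
  rcases le_or_gt t (Iio b).ncard with hb | hb
  · exact Or.inl (max_eq_left (min_le_of_right_le (by linarith)))
  · exact Or.inr (by rw [min_eq_left (by linarith), max_eq_right zero_le_one])

/-- The rooted set consisting of the points at height at most `t`. -/
noncomputable def heightSet (t : ℝ) : rootedSets E := ⟨_, height_mem_rootedSets t⟩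

lemma heightSet_apply (t : ℝ) (e : E) :
    (heightSet t).1 e = max 0 (min 1 (t - (Iio e).ncard)) := rfl

lemma continuous_heightSet : Continuous (heightSet : ℝ → rootedSets E) :=
  Continuous.subtype_mk (continuous_pi fun e => by fun_prop) _

lemma truncate_heightSet_zero (x : forestTree E) : truncate (heightSet 0) x = 0 := by
  refine Subtype.ext (funext fun e => ?_)
  have height_eq_zero : (heightSet 0).1 e = 0 := by
    rw [heightSet_apply, zero_sub]
    exact max_eq_left (min_le_of_right_le (neg_nonpos.2 (Nat.cast_nonneg _)))
  exact (congrArg (min _) height_eq_zero).trans (min_eq_right (x.2.1.1 e).1)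

lemma truncate_heightSet_card (x : forestTree E) : truncate (heightSet (Nat.card E)) x = x := by
  refine truncate_eq_self fun e => (x.2.1.1 e).2.trans (le_max_of_le_right (le_min le_rfl ?_))
  have ncard_lt : (Iio e).ncard < Nat.card E := by
    rw [← ncard_univ]
    exact ncard_lt_ncard (ssubset_univ_iff.2 ((ne_univ_iff_exists_notMem _).2 ⟨e, lt_irrefl e⟩))
  have ncard_add_one_le : ((Iio e).ncard : ℝ) + 1 ≤ Nat.card E := by exact_mod_cast ncard_lt
  linarith

lemma isConnected_rootedSubtree (g : rootedSets E) : IsConnected (rootedSubtree g) := by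
  refine ⟨⟨0, zero_mem_rootedSubtree g⟩, isPreconnected_of_forall 0 fun x hx => ?_⟩
  have continuous_path : Continuous fun t : ℝ => truncate (heightSet t) x :=
    continuous_truncate.comp (continuous_heightSet.prodMk continuous_const)
  exact ⟨range fun t : ℝ => truncate (heightSet t) x,
    range_subset_iff.2 fun t e => (min_le_left _ _).trans (hx e),
    ⟨0, truncate_heightSet_zero x⟩, ⟨Nat.card E, truncate_heightSet_card x⟩,
    isPreconnected_range continuous_path⟩

end Height

lemma exists_mem_rootedSubtree_apply_eq (hE : IsForestOrder E) (g : rootedSets E) (e : E) :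
    ∃ x ∈ rootedSubtree g, x.1 e = g.1 e := by
  classical
  let x : E → ℝ := fun a => if a ≤ e then g.1 a else 0
  have le_of_ne_zero {a : E} (ha : x a ≠ 0) : a ≤ e := by
    by_contra h
    exact ha (if_neg h)
  have x_mem_Icc (a : E) : x a ∈ Icc 0 (g.1 a) := by
    simp only [x]
    split_ifs
    exacts [right_mem_Icc.2 (g.2.1 a).1, left_mem_Icc.2 (g.2.1 a).1]
  have x_mem : x ∈ forestTree E := by
    refine ⟨⟨fun a => ⟨(x_mem_Icc a).1, (x_mem_Icc a).2.trans (g.2.1 a).2⟩, fun a b hab => ?_⟩,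
      fun a b ha hb => hE a b e (le_of_ne_zero ha) (le_of_ne_zero hb)⟩
    by_cases hb : b ≤ e
    · simpa only [x, if_pos hb, if_pos (hab.le.trans hb)] using g.2.2 a b hab
    · exact Or.inl (if_neg hb)
  exact ⟨⟨x, x_mem⟩, fun a => (x_mem_Icc a).2, if_pos le_rfl⟩

lemma rootedSubtree_subset_iff (hE : IsForestOrder E) {g g' : rootedSets E} :
    rootedSubtree g ⊆ rootedSubtree g' ↔ ∀ e, g.1 e ≤ g'.1 e := by
  refine ⟨fun h e => ?_, fun h x hx e => (hx e).trans (h e)⟩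
  obtain ⟨x, hx, hxe⟩ := exists_mem_rootedSubtree_apply_eq hE g e
  exact hxe ▸ h hx e

lemma rootedSubtree_injective (hE : IsForestOrder E) :
    Function.Injective (rootedSubtree (E := E)) := fun _ _ h =>
  Subtype.ext (funext fun e => le_antisymm ((rootedSubtree_subset_iff hE).1 h.subset e)
    ((rootedSubtree_subset_iff hE).1 h.superset e))

lemma exists_last_edge [Finite E] {x : forestTree E} (hx : x ≠ 0) :
    ∃ e, x.1 e ≠ 0 ∧ ∀ c, e < c → x.1 c = 0 := by
  have support_nonempty : {e | x.1 e ≠ 0}.Nonempty := by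
    by_contra! h
    exact hx (Subtype.ext (funext fun e => not_not.1 (eq_empty_iff_forall_notMem.1 h e)))
  obtain ⟨e, he⟩ := (toFinite {e | x.1 e ≠ 0}).exists_maximal support_nonempty
  refine ⟨e, he.prop, fun c hec => ?_⟩
  by_contra hc
  exact hec.not_ge (he.le_of_ge hc hec.le)

lemma eq_of_last_edge_eq {x z : forestTree E} {e : E} (hx : x.1 e ≠ 0)
    (hx_last : ∀ c, e < c → x.1 c = 0) (hz_last : ∀ c, e < c → z.1 c = 0) (h : z.1 e = x.1 e) :
    z = x := by
  have hz : z.1 e ≠ 0 := h.trans_ne hx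
  refine Subtype.ext (funext fun c => ?_)
  by_cases hce : c ≤ e
  · rcases hce.eq_or_lt with rfl | hc
    · exact h
    · rw [forestTree_apply_eq_one z hc hz, forestTree_apply_eq_one x hc hx]
  · have apply_eq_zero {y : forestTree E} (hy : y.1 e ≠ 0) (hy_last : ∀ c, e < c → y.1 c = 0) :
        y.1 c = 0 := by
      by_contra hc
      exact hc (hy_last c (((y.2.2 c e hc hy).resolve_left hce).lt_of_not_ge hce))
    rw [apply_eq_zero hz hz_last, apply_eq_zero hx hx_last]

/-- The length of the part of the arc from the root to `x` formed by edges above `e`. -/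
noncomputable def heightAbove [Fintype E] (e : E) (x : forestTree E) : ℝ :=
  open Classical in ∑ c ∈ Finset.univ.filter (e ≤ ·), x.1 c

section HeightAbove

variable [Fintype E]

lemma heightAbove_zero (e : E) : heightAbove e 0 = 0 :=
  Finset.sum_eq_zero fun _ _ => rfl

lemma continuous_heightAbove (e : E) : Continuous (heightAbove e) :=
  continuous_finsetSum _ fun c _ => (continuous_apply c).comp continuous_subtype_val

lemma le_heightAbove {e c : E} (hc : e ≤ c) (x : forestTree E) : x.1 c ≤ heightAbove e x :=
  Finset.single_le_sum (f := x.1) (fun a _ => (x.2.1.1 a).1) (by simpa using hc)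

lemma add_le_heightAbove {e c : E} (hc : e < c) (x : forestTree E) :
    x.1 e + x.1 c ≤ heightAbove e x := by
  classical
  rw [← Finset.sum_pair (f := x.1) hc.ne]
  refine Finset.sum_le_sum_of_subset_of_nonneg ?_ fun a _ _ => (x.2.1.1 a).1
  simp only [Finset.insert_subset_iff, Finset.singleton_subset_iff, Finset.mem_filter,
    Finset.mem_univ, true_and]
  exact ⟨le_rfl, hc.le⟩

lemma heightAbove_eq_apply {e : E} {x : forestTree E} (hx : ∀ c, e < c → x.1 c = 0) :
    heightAbove e x = x.1 e := by
  refine Finset.sum_eq_single e (fun c hc hce => hx c ?_) (by simp)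
  exact lt_of_le_of_ne (by simpa using hc) hce.symm

lemma apply_eq_zero_of_heightAbove_le_one {e c : E} {x : forestTree E}
    (hx : heightAbove e x ≤ 1) (hec : e < c) : x.1 c = 0 := by
  by_contra hc
  have sum_le := add_le_heightAbove hec x
  rw [forestTree_apply_eq_one x hec hc] at sum_le
  have apply_pos := (x.2.1.1 c).1.lt_of_ne' hc
  linarith

lemma eq_of_heightAbove_eq {x z : forestTree E} {e : E} (hx : x.1 e ≠ 0)
    (hx_last : ∀ c, e < c → x.1 c = 0) (h : heightAbove e z = x.1 e) : z = x := by
  have hz_last (c : E) (hc : e < c) : z.1 c = 0 :=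
    apply_eq_zero_of_heightAbove_le_one (h.trans_le (x.2.1.1 e).2) hc
  exact eq_of_last_edge_eq hx hx_last hz_last ((heightAbove_eq_apply hz_last).symm.trans h)

end HeightAbove

-- A connected set containing the root and a point beyond `x` on the last edge of `x` takes all
-- intermediate heights above that edge, in particular that of `x`.
lemma mem_of_isPreconnected [Finite E] {A : Set (forestTree E)} (hA : IsPreconnected A)
    (h0 : 0 ∈ A) {x : forestTree E} (hx : ∀ e, ∃ a ∈ A, x.1 e ≤ a.1 e) : x ∈ A := by
  have := Fintype.ofFinite E
  by_cases hx0 : x = 0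
  · exact hx0 ▸ h0
  obtain ⟨e, he, he_last⟩ := exists_last_edge hx0
  obtain ⟨a, haA, hxa⟩ := hx e
  obtain ⟨z, hzA, hz⟩ := hA.intermediate_value h0 haA (continuous_heightAbove e).continuousOn
    ⟨(heightAbove_zero e).trans_le (x.2.1.1 e).1, hxa.trans (le_heightAbove le_rfl a)⟩
  exact eq_of_heightAbove_eq he he_last hz ▸ hzA

lemma exists_rootedSubtree_eq [Finite E] {A : Set (forestTree E)} (hA : IsCompact A)
    (hconn : IsPreconnected A) (h0 : 0 ∈ A) : ∃ g, rootedSubtree g = A := by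
  have exists_max (e : E) : ∃ a ∈ A, ∀ x ∈ A, x.1 e ≤ a.1 e :=
    hA.exists_isMaxOn ⟨0, h0⟩ ((continuous_apply e).comp continuous_subtype_val).continuousOn
  choose a haA ha using exists_max
  let g : rootedSets E := ⟨fun e => (a e).1 e, fun e => (a e).2.1.1 e, fun b c hbc =>
    or_iff_not_imp_left.2 fun hc => le_antisymm ((a b).2.1.1 b).2
      ((forestTree_apply_eq_one _ hbc hc).symm.trans_le (ha b _ (haA c)))⟩
  exact ⟨g, Subset.antisymm (fun x hx => mem_of_isPreconnected hconn h0 fun e => ⟨a e, haA e, hx e⟩)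
    fun x hx e => ha e x hx⟩

section Hyperspace

variable [Finite E] {X : Type*} [MetricSpace X]

/-- The subcontinuum of `X` encoded by the rooted set `g`. -/
noncomputable def rootedContinuum (J : forestTree E ≃ₜ X) (g : rootedSets E) : CP X (J 0) :=
  ⟨⟨⟨J '' rootedSubtree g, (range_truncate g ▸ isCompact_range (continuous_truncate.comp
        (.prodMk_right g))).image J.continuous⟩, (isConnected_rootedSubtree g).nonempty.image J⟩,
    (isConnected_rootedSubtree g).image J J.continuous.continuousOn,
    mem_image_of_mem J (zero_mem_rootedSubtree g)⟩

lemma coe_rootedContinuum (J : forestTree E ≃ₜ X) (g : rootedSets E) :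
    ((rootedContinuum J g).1 : Set X) = J '' rootedSubtree g := rfl

lemma continuous_rootedContinuum (J : forestTree E ≃ₜ X) : Continuous (rootedContinuum J) := by
  refine Continuous.subtype_mk ?_ _
  have continuous_map := Continuous.nonemptyCompacts_map'
    (f := fun _ : rootedSets E => (⊤ : NonemptyCompacts (forestTree E)))
    (g := fun g x => J (truncate g x)) continuous_const (J.continuous.comp continuous_truncate)
  refine continuous_map.congr fun g => SetLike.coe_injective ?_
  simp [← range_truncate, ← range_comp, Function.comp_def]

lemma rootedContinuum_bijective (hE : IsForestOrder E) (J : forestTree E ≃ₜ X) :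
    Function.Bijective (rootedContinuum J) := by
  constructor
  · intro g g' h
    refine rootedSubtree_injective hE (image_injective.2 J.injective ?_)
    rw [← coe_rootedContinuum, h, coe_rootedContinuum]
  · intro A
    obtain ⟨g, hg⟩ := exists_rootedSubtree_eq (J.isCompact_preimage.2 A.1.isCompact)
      (J.isPreconnected_preimage.2 A.2.1.2) A.2.2
    refine ⟨g, Subtype.ext (SetLike.coe_injective ?_)⟩
    rw [coe_rootedContinuum, hg, image_preimage_eq _ J.surjective]

/-- The hyperspace of the subcontinua containing the root is the space of rooted sets. -/
noncomputable def rootedContinuumHomeomorph (hE : IsForestOrder E) (J : forestTree E ≃ₜ X) :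
    rootedSets E ≃ₜ CP X (J 0) :=
  Continuous.homeoOfEquivCompactToT2 (f := Equiv.ofBijective _ (rootedContinuum_bijective hE J))
    (continuous_rootedContinuum J)

end Hyperspace

end ForestTree

/-! ### Merging edges -/

section Merge

variable {E : Type*} {a b : E}

open Classical in
/-- The coordinates, after edge `b` has been merged into edge `a`, of the point with
coordinates `x`: the merged edge is traversed at half speed. -/
noncomputable def mergeEdge (a b : E) (x : E → ℝ) (e : {e // e ≠ b}) : ℝ :=
  if e.1 = a then (x a + x b) / 2 else x e.1

open Classical in
/-- The coordinates, after edge `a` has been subdivided into `a` followed by `b`, of the point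
with coordinates `y`: the inverse of `mergeEdge`. -/
noncomputable def splitEdge (hab : a ≠ b) (y : {e // e ≠ b} → ℝ) (e : E) : ℝ :=
  if h : e = b then max 0 (2 * y ⟨a, hab⟩ - 1)
  else if e = a then min 1 (2 * y ⟨a, hab⟩) else y ⟨e, h⟩

lemma mergeEdge_self (hab : a ≠ b) (x : E → ℝ) : mergeEdge a b x ⟨a, hab⟩ = (x a + x b) / 2 :=
  if_pos rfl

lemma mergeEdge_of_ne (x : E → ℝ) {e : {e // e ≠ b}} (he : e.1 ≠ a) : mergeEdge a b x e = x e :=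
  if_neg he

lemma continuous_mergeEdge (a b : E) : Continuous (mergeEdge a b) := by
  refine continuous_pi fun e => ?_
  simp only [mergeEdge]
  split_ifs <;> fun_prop

lemma mergeEdge_mem_Icc (a b : E) {x : E → ℝ} (hx : ∀ e, x e ∈ Icc (0 : ℝ) 1) (e : {e // e ≠ b}) :
    mergeEdge a b x e ∈ Icc (0 : ℝ) 1 := by
  unfold mergeEdge
  split_ifs
  · have hxa := hx a
    have hxb := hx b
    constructor <;> linarith [hxa.1, hxa.2, hxb.1, hxb.2]
  · exact hx e

section Split

variable {y : {e // e ≠ b} → ℝ}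

lemma splitEdge_right (hab : a ≠ b) : splitEdge hab y b = max 0 (2 * y ⟨a, hab⟩ - 1) :=
  dif_pos rfl

lemma splitEdge_left (hab : a ≠ b) : splitEdge hab y a = min 1 (2 * y ⟨a, hab⟩) := by
  rw [splitEdge, dif_neg hab, if_pos rfl]

lemma splitEdge_of_ne (hab : a ≠ b) {e : E} (ha : e ≠ a) (hb : e ≠ b) :
    splitEdge hab y e = y ⟨e, hb⟩ := by
  rw [splitEdge, dif_neg hb, if_neg ha]

lemma continuous_splitEdge (hab : a ≠ b) : Continuous (splitEdge hab) := by
  refine continuous_pi fun e => ?_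
  simp only [splitEdge]
  split_ifs <;> fun_prop

lemma mergeEdge_splitEdge (hab : a ≠ b) (y : {e // e ≠ b} → ℝ) :
    mergeEdge a b (splitEdge hab y) = y := by
  ext ⟨e, heb⟩
  by_cases hea : e = a
  · subst hea
    rw [mergeEdge_self, splitEdge_left, splitEdge_right]
    rcases le_total 1 (2 * y ⟨e, heb⟩) with h | h
    · rw [min_eq_left h, max_eq_right (by linarith)]; ring
    · rw [min_eq_right h, max_eq_left (by linarith)]; ring
  · rw [mergeEdge_of_ne _ hea, splitEdge_of_ne _ hea heb]

lemma splitEdge_mem_Icc (hab : a ≠ b) (hy : ∀ e, y e ∈ Icc (0 : ℝ) 1) (e : E) :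
    splitEdge hab y e ∈ Icc (0 : ℝ) 1 := by
  have hya := hy ⟨a, hab⟩
  unfold splitEdge
  split_ifs with h
  · exact ⟨le_max_left _ _, max_le zero_le_one (by linarith [hya.2])⟩
  · exact ⟨le_min zero_le_one (by linarith [hya.1]), min_le_left _ _⟩
  · exact hy ⟨e, h⟩

lemma splitEdge_left_eq_one (hab : a ≠ b) (h : splitEdge hab y b ≠ 0) : splitEdge hab y a = 1 := by
  rw [splitEdge_right] at h
  rw [splitEdge_left]
  refine min_eq_left ?_
  by_contra! hlt
  exact h (max_eq_left (by linarith))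

lemma ne_zero_of_splitEdge_ne_zero (hab : a ≠ b) {c : E} (hc : c ≠ b)
    (h : splitEdge hab y c ≠ 0) : y ⟨c, hc⟩ ≠ 0 := by
  by_cases hca : c = a
  · subst hca
    intro hy0
    rw [splitEdge_left, hy0, mul_zero] at h
    exact h (min_eq_right zero_le_one)
  · rwa [splitEdge_of_ne hab hca hc] at h

lemma splitEdge_eq_one (hab : a ≠ b) {c : E} (hc : c ≠ b) (h : y ⟨c, hc⟩ = 1) :
    splitEdge hab y c = 1 := by
  by_cases hca : c = a
  · subst hca
    rw [splitEdge_left, h]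
    norm_num
  · rwa [splitEdge_of_ne hab hca hc]

end Split

variable [PartialOrder E]

lemma IsForestOrder.le_of_lt_of_isLeast_Ioi (hE : IsForestOrder E) (hb : IsLeast (Ioi a) b) {c : E}
    (hc : c < b) : c ≤ a := by
  rcases hE c a b hc.le hb.1.le with h | h
  · exact h
  · exact (h.eq_or_lt.resolve_right fun hac => hc.not_ge (hb.2 hac)).ge

lemma ne_zero_of_mergeEdge_ne_zero (hab : a < b) {x : E → ℝ} (hx : x ∈ rootedSets E)
    {e : {e // e ≠ b}} (he : mergeEdge a b x e ≠ 0) : x e ≠ 0 := by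
  by_cases hea : e.1 = a
  · obtain ⟨e, heb⟩ := e
    obtain rfl : e = a := hea
    rcases hx.2 e b hab with hxb | hxe
    · intro hxe
      rw [mergeEdge_self, hxb, hxe] at he
      norm_num at he
    · exact hxe.trans_ne one_ne_zero
  · rwa [mergeEdge_of_ne x hea] at he

lemma mergeEdge_mem_rootedSets (hb : IsLeast (Ioi a) b) {x : E → ℝ} (hx : x ∈ rootedSets E) :
    mergeEdge a b x ∈ rootedSets {e // e ≠ b} := by
  refine ⟨mergeEdge_mem_Icc a b hx.1, fun c d hcd => or_iff_not_imp_left.2 fun hd => ?_⟩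
  have hxd := ne_zero_of_mergeEdge_ne_zero hb.1 hx hd
  have hxc : x c = 1 := (hx.2 c d hcd).resolve_left hxd
  by_cases hca : c.1 = a
  · obtain ⟨c, hcb⟩ := c
    obtain rfl : c = a := hca
    have hbd : b < d.1 := (hb.2 hcd).lt_of_ne d.2.symm
    rw [mergeEdge_self, hxc, (hx.2 b d hbd).resolve_left hxd]
    norm_num
  · rw [mergeEdge_of_ne x hca, hxc]

lemma mergeEdge_mem_forestTree (hb : IsLeast (Ioi a) b) {x : E → ℝ} (hx : x ∈ forestTree E) :
    mergeEdge a b x ∈ forestTree {e // e ≠ b} :=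
  ⟨mergeEdge_mem_rootedSets hb hx.1, fun _ _ hc hd =>
    hx.2 _ _ (ne_zero_of_mergeEdge_ne_zero hb.1 hx.1 hc)
      (ne_zero_of_mergeEdge_ne_zero hb.1 hx.1 hd)⟩

lemma splitEdge_mergeEdge (hab : a < b) {x : E → ℝ} (hx : x ∈ rootedSets E) :
    splitEdge hab.ne (mergeEdge a b x) = x := by
  have hxa := hx.1 a
  have hxb := hx.1 b
  ext e
  by_cases hea : e = a
  · subst hea
    rw [splitEdge_left, mergeEdge_self]
    rcases hx.2 e b hab with h | h
    · rw [h, min_eq_right] <;> linarith [hxa.2]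
    · rw [h, min_eq_left]
      linarith [hxb.1]
  by_cases heb : e = b
  · subst heb
    rw [splitEdge_right, mergeEdge_self]
    rcases hx.2 a e hab with h | h
    · rw [h, max_eq_left]
      linarith [hxa.2]
    · rw [h, max_eq_right] <;> linarith [hxb.1]
  rw [splitEdge_of_ne _ hea heb, mergeEdge_of_ne x hea]

lemma splitEdge_mem_rootedSets (hE : IsForestOrder E) (hb : IsLeast (Ioi a) b)
    {y : {e // e ≠ b} → ℝ} (hy : y ∈ rootedSets {e // e ≠ b}) :
    splitEdge hb.1.ne y ∈ rootedSets E := by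
  refine ⟨splitEdge_mem_Icc _ hy.1, fun c d hcd => or_iff_not_imp_left.2 fun hd => ?_⟩
  by_cases hdb : d = b
  · subst hdb
    have ha : splitEdge hb.1.ne y a = 1 := splitEdge_left_eq_one _ hd
    rcases (hE.le_of_lt_of_isLeast_Ioi hb hcd).eq_or_lt with rfl | hca
    · exact ha
    · exact splitEdge_eq_one _ hcd.ne ((hy.2 ⟨c, hcd.ne⟩ ⟨a, hb.1.ne⟩ hca).resolve_left
        (ne_zero_of_splitEdge_ne_zero _ _ (ha.trans_ne one_ne_zero)))
  have hyd := ne_zero_of_splitEdge_ne_zero _ hdb hd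
  by_cases hcb : c = b
  · subst hcb
    rw [splitEdge_right, (hy.2 ⟨a, hb.1.ne⟩ ⟨d, hdb⟩ (hb.1.trans hcd)).resolve_left hyd]
    norm_num
  · exact splitEdge_eq_one _ hcb ((hy.2 ⟨c, hcb⟩ ⟨d, hdb⟩ hcd).resolve_left hyd)

lemma splitEdge_mem_forestTree (hE : IsForestOrder E) (hb : IsLeast (Ioi a) b)
    {y : {e // e ≠ b} → ℝ} (hy : y ∈ forestTree {e // e ≠ b}) :
    splitEdge hb.1.ne y ∈ forestTree E := by
  have comparable_right {d : E} (hdb : d ≠ b) (hb0 : splitEdge hb.1.ne y b ≠ 0)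
      (hd0 : splitEdge hb.1.ne y d ≠ 0) : b ≤ d ∨ d ≤ b := by
    have ha0 : splitEdge hb.1.ne y a ≠ 0 :=
      (splitEdge_left_eq_one _ hb0).trans_ne one_ne_zero
    rcases hy.2 ⟨a, hb.1.ne⟩ ⟨d, hdb⟩ (ne_zero_of_splitEdge_ne_zero _ _ ha0)
      (ne_zero_of_splitEdge_ne_zero _ _ hd0) with had | hda
    · rcases (Subtype.mk_le_mk.1 had).eq_or_lt with rfl | had
      · exact Or.inr hb.1.le
      · exact Or.inl (hb.2 had)
    · exact Or.inr ((Subtype.mk_le_mk.1 hda).trans hb.1.le)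
  refine ⟨splitEdge_mem_rootedSets hE hb hy.1, fun c d hc hd => ?_⟩
  by_cases hcb : c = b <;> by_cases hdb : d = b
  · exact Or.inl (hcb.trans hdb.symm).le
  · subst hcb
    exact comparable_right hdb hc hd
  · subst hdb
    exact (comparable_right hcb hd hc).symm
  · exact hy.2 ⟨c, hcb⟩ ⟨d, hdb⟩ (ne_zero_of_splitEdge_ne_zero _ _ hc)
      (ne_zero_of_splitEdge_ne_zero _ _ hd)

/-- Merging an edge with its only successor does not change the tree. -/
noncomputable def mergeHomeomorph (hE : IsForestOrder E) (hb : IsLeast (Ioi a) b) :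
    forestTree E ≃ₜ forestTree {e // e ≠ b} where
  toFun x := ⟨mergeEdge a b x.1, mergeEdge_mem_forestTree hb x.2⟩
  invFun y := ⟨splitEdge hb.1.ne y.1, splitEdge_mem_forestTree hE hb y.2⟩
  left_inv x := Subtype.ext (splitEdge_mergeEdge hb.1 x.2.1)
  right_inv y := Subtype.ext (mergeEdge_splitEdge hb.1.ne y.1)
  continuous_toFun := ((continuous_mergeEdge a b).comp continuous_subtype_val).subtype_mk _
  continuous_invFun := ((continuous_splitEdge hb.1.ne).comp continuous_subtype_val).subtype_mk _

lemma mergeHomeomorph_zero (hE : IsForestOrder E) (hb : IsLeast (Ioi a) b) :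
    mergeHomeomorph hE hb 0 = 0 := by
  refine Subtype.ext (funext fun e => ?_)
  by_contra h
  exact ne_zero_of_mergeEdge_ne_zero hb.1 zero_mem_forestTree.1 h rfl

lemma exists_isLeast_Ioi_of_not_isBranchingOrder [Finite E] (hE : IsForestOrder E)
    (hB : ¬ IsBranchingOrder E) : ∃ a b : E, IsLeast (Ioi a) b := by
  unfold IsBranchingOrder at hB
  push Not at hB
  obtain ⟨a, d, had, hd⟩ := hB
  obtain ⟨b, hb⟩ := (toFinite {b | a < b ∧ b ≤ d}).exists_minimal ⟨d, had, le_rfl⟩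
  refine ⟨a, b, hb.prop.1, fun c hac => ?_⟩
  by_cases hdc : d ≤ c
  · exact hb.prop.2.trans hdc
  · have hcd : c ≤ d := hd c hac hdc
    exact (hE b c d hb.prop.2 hcd).elim id (hb.le_of_le ⟨hac, hcd⟩)

theorem IsForestOrder.exists_isBranchingOrder {E : Type u} [PartialOrder E] [Finite E]
    (hE : IsForestOrder E) :
    ∃ (F : Type u) (_ : PartialOrder F) (_ : Finite F) (K : forestTree F ≃ₜ forestTree E),
      IsForestOrder F ∧ IsBranchingOrder F ∧ K 0 = 0 := by
  induction hn : Nat.card E using Nat.strong_induction_on generalizing E with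
  | _ n ih =>
    by_cases hB : IsBranchingOrder E
    · exact ⟨E, _, inferInstance, .refl _, hE, hB, rfl⟩
    obtain ⟨a, b, hb⟩ := exists_isLeast_Ioi_of_not_isBranchingOrder hE hB
    have card_lt : Nat.card {e // e ≠ b} < n := hn ▸ Finite.card_subtype_lt (x := b) (not_not.2 rfl)
    obtain ⟨F, _, _, K, hF, hFB, hK⟩ := ih _ card_lt (E := {e // e ≠ b}) (fun c d e => hE c d e) rfl
    refine ⟨F, _, inferInstance, K.trans (mergeHomeomorph hE hb).symm, hF, hFB, ?_⟩
    rw [Homeomorph.trans_apply, hK, Homeomorph.symm_apply_eq, mergeHomeomorph_zero]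

end Merge

/-! ### Growing a forest along arcs -/

/-- The forest `E` with one more edge, placed just above the edges of `D`. -/
def GrownForest {E : Type*} [PartialOrder E] (_ : LowerSet E) : Type _ := Option E

namespace GrownForest

variable {E : Type*} [PartialOrder E] {D : LowerSet E}

/-- An edge of the original forest, as an edge of the grown forest. -/
def old (D : LowerSet E) (e : E) : GrownForest D := some e

/-- The additional edge of the grown forest. -/
def new (D : LowerSet E) : GrownForest D := none

instance [Finite E] : Finite (GrownForest D) := inferInstanceAs (Finite (Option E))

instance : PartialOrder (GrownForest D) where
  le
    | some a, some b => a ≤ b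
    | some a, none => a ∈ D
    | none, some _ => False
    | none, none => True
  le_refl
    | some a => le_refl a
    | none => trivial
  le_trans
    | some _, some _, some _, h, h' => le_trans (α := E) h h'
    | some _, some _, none, h, h' => D.lower h h'
    | some _, none, none, h, _ => h
    | none, none, none, _, _ => trivial
  le_antisymm
    | some _, some _, h, h' => congrArg some (le_antisymm (α := E) h h')
    | none, none, _, _ => rfl

lemma old_le_old {a b : E} : old D a ≤ old D b ↔ a ≤ b := Iff.rfl

lemma old_lt_old {a b : E} : old D a < old D b ↔ a < b := by
  rw [lt_iff_le_not_ge, lt_iff_le_not_ge, old_le_old, old_le_old]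

lemma old_le_new {a : E} : old D a ≤ new D ↔ a ∈ D := Iff.rfl

lemma not_new_le_old {a : E} : ¬ new D ≤ old D a := id

lemma old_lt_new {a : E} : old D a < new D ↔ a ∈ D :=
  ⟨fun h => old_le_new.1 h.le, fun h => lt_of_le_not_ge (old_le_new.2 h) not_new_le_old⟩

lemma forall_iff {P : GrownForest D → Prop} : (∀ e, P e) ↔ (∀ e, P (old D e)) ∧ P (new D) :=
  Option.forall.trans and_comm

lemma not_new_lt {a : GrownForest D} : ¬ new D < a :=
  (forall_iff (P := (¬ new D < ·))).2 ⟨fun _ h => not_new_le_old h.le, lt_irrefl _⟩ a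

lemma isForestOrder (hE : IsForestOrder E) (hD : IsChain (· ≤ ·) (D : Set E)) :
    IsForestOrder (GrownForest D)
  | some a, some b, some c, h, h' => hE a b c h h'
  | some _, some _, none, h, h' => hD.total h h'
  | some _, none, none, h, _ => Or.inl h
  | none, some _, none, _, h => Or.inr h
  | none, none, none, _, _ => Or.inl trivial

end GrownForest

section Growth

open GrownForest

variable {E : Type*} [PartialOrder E]

/-- The vertices of the tree are the points with coordinates `0` and `1`. -/
def IsVertex (x : forestTree E) : Prop := ∀ e, x.1 e = 0 ∨ x.1 e = 1

/-- The edges met by the arc from the root to `x`. -/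
def edgesBelow (x : forestTree E) : LowerSet E :=
  ⟨{e | x.1 e ≠ 0}, fun a b hba ha => by
    rcases hba.eq_or_lt with rfl | hba
    · exact ha
    · exact (forestTree_apply_eq_one x hba ha).trans_ne one_ne_zero⟩

lemma isChain_edgesBelow (x : forestTree E) : IsChain (· ≤ ·) (edgesBelow x : Set E) :=
  fun _ ha _ hb _ => x.2.2 _ _ ha hb

lemma IsVertex.apply_of_mem_edgesBelow {x : forestTree E} (hx : IsVertex x) {e : E}
    (he : e ∈ edgesBelow x) : x.1 e = 1 :=
  (hx e).resolve_left he

lemma apply_of_notMem_edgesBelow {x : forestTree E} {e : E} (he : e ∉ edgesBelow x) : x.1 e = 0 :=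
  not_not.1 he

variable {D : LowerSet E}

/-- The point of the grown tree with coordinates `x` on the original edges and `t` on the
additional edge. -/
def growCoord (D : LowerSet E) (x : E → ℝ) (t : ℝ) : GrownForest D → ℝ
  | some e => x e
  | none => t

lemma growCoord_mem_forestTree {x : E → ℝ} (hx : x ∈ forestTree E) {t : ℝ}
    (ht : t ∈ Icc (0 : ℝ) 1) (h : t ≠ 0 → (∀ e ∈ D, x e = 1) ∧ ∀ e ∉ D, x e = 0) :
    growCoord D x t ∈ forestTree (GrownForest D) := by
  have mem_of_ne_zero {a : E} (ha : x a ≠ 0) (ht : t ≠ 0) : a ∈ D := by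
    by_contra haD
    exact ha ((h ht).2 a haD)
  refine ⟨⟨forall_iff.2 ⟨hx.1.1, ht⟩, ?_⟩, ?_⟩
  · refine forall_iff.2 ⟨fun a => forall_iff.2 ⟨fun b hab => ?_, fun ha => ?_⟩,
      fun b hb => (not_new_lt hb).elim⟩
    · exact hx.1.2 a b (old_lt_old.1 hab)
    · exact or_iff_not_imp_left.2 fun ht => (h ht).1 a (old_lt_new.1 ha)
  · refine forall_iff.2 ⟨fun a => forall_iff.2 ⟨hx.2 a, fun ha ht => ?_⟩,
      forall_iff.2 ⟨fun b ht hb => ?_, fun _ _ => Or.inl le_rfl⟩⟩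
    · exact Or.inl (old_le_new.2 (mem_of_ne_zero ha ht))
    · exact Or.inr (old_le_new.2 (mem_of_ne_zero hb ht))

/-- The retraction of the grown tree onto the original tree. -/
def restrictOld (y : forestTree (GrownForest D)) : forestTree E :=
  ⟨fun e => y.1 (old D e), ⟨fun _ => y.2.1.1 _, fun _ _ hab => y.2.1.2 _ _ (old_lt_old.2 hab)⟩,
    fun _ _ ha hb => y.2.2 _ _ ha hb⟩

lemma continuous_restrictOld : Continuous (restrictOld (D := D)) :=
  Continuous.subtype_mk (f := fun (y : forestTree (GrownForest D)) e => y.1 (old D e))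
    (continuous_pi fun e => (continuous_apply (old D e)).comp continuous_subtype_val) _

lemma eq_of_restrictOld_eq {y z : forestTree (GrownForest D)} (h : restrictOld y = restrictOld z)
    (hnew : y.1 (new D) = z.1 (new D)) : y = z :=
  Subtype.ext (funext (forall_iff.2 ⟨fun e => congrFun (congrArg Subtype.val h) e, hnew⟩))

/-- The inclusion of the original tree in the grown tree. -/
def growPoint (D : LowerSet E) (x : forestTree E) : forestTree (GrownForest D) :=
  ⟨growCoord D x.1 0, growCoord_mem_forestTree x.2 ⟨le_rfl, zero_le_one⟩ fun h => (h rfl).elim⟩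

lemma IsVertex.growPoint {x : forestTree E} (hx : IsVertex x) : IsVertex (growPoint D x) :=
  forall_iff.2 ⟨hx, Or.inl rfl⟩

section Tip

variable {x : forestTree E}

/-- The point at distance `t` from the vertex `x` on the edge growing out of `x`. -/
def tipPoint (hx : IsVertex x) (t : Icc (0 : ℝ) 1) : forestTree (GrownForest (edgesBelow x)) :=
  ⟨growCoord _ x.1 t, growCoord_mem_forestTree x.2 t.2 fun _ =>
    ⟨fun _ => hx.apply_of_mem_edgesBelow, fun _ => apply_of_notMem_edgesBelow⟩⟩

lemma IsVertex.tipPoint_one (hx : IsVertex x) : IsVertex (tipPoint hx 1) :=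
  forall_iff.2 ⟨hx, Or.inr rfl⟩

lemma IsVertex.restrictOld_eq (hx : IsVertex x) {y : forestTree (GrownForest (edgesBelow x))}
    (hy : y.1 (new _) ≠ 0) : restrictOld y = x := by
  refine Subtype.ext (funext fun e => ?_)
  by_cases he : e ∈ edgesBelow x
  · rw [hx.apply_of_mem_edgesBelow he]
    exact forestTree_apply_eq_one y (old_lt_new.2 he) hy
  · rw [apply_of_notMem_edgesBelow he]
    by_contra h
    exact (y.2.2 _ _ h hy).elim he not_new_le_old

end Tip

section GrowMap

variable {X : Type*} {j : forestTree E → X} {γ : ℝ → X}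

open Classical in
/-- The map of the grown tree that extends `j` and runs along `γ` on the additional edge. -/
noncomputable def growMap (D : LowerSet E) (j : forestTree E → X) (γ : ℝ → X)
    (y : forestTree (GrownForest D)) : X :=
  if y.1 (new D) = 0 then j (restrictOld y) else γ (y.1 (new D))

lemma growMap_of_eq_zero {y : forestTree (GrownForest D)} (hy : y.1 (new D) = 0) :
    growMap D j γ y = j (restrictOld y) := if_pos hy

lemma growMap_of_ne_zero {y : forestTree (GrownForest D)} (hy : y.1 (new D) ≠ 0) :
    growMap D j γ y = γ (y.1 (new D)) := if_neg hy

lemma growMap_zero : growMap D j γ 0 = j 0 := growMap_of_eq_zero rfl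

lemma growMap_growPoint (x : forestTree E) : growMap D j γ (growPoint D x) = j x :=
  growMap_of_eq_zero rfl

variable {x : forestTree E}

lemma growMap_tipPoint (hx : IsVertex x) (h0 : γ 0 = j x) (t : Icc (0 : ℝ) 1) :
    growMap _ j γ (tipPoint hx t) = γ t := by
  by_cases ht : (t : ℝ) = 0
  · rw [ht, h0]
    exact growMap_of_eq_zero ht
  · exact growMap_of_ne_zero ht

lemma injective_growMap (hx : IsVertex x) (hj : Function.Injective j) (hγ : InjOn γ (Icc 0 1))
    (hdisj : ∀ t ∈ Ioc (0 : ℝ) 1, γ t ∉ range j) :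
    Function.Injective (growMap (edgesBelow x) j γ) := by
  have mem_Ioc {y : forestTree (GrownForest (edgesBelow x))} (hy : y.1 (new _) ≠ 0) :
      y.1 (new _) ∈ Ioc (0 : ℝ) 1 := ⟨(y.2.1.1 _).1.lt_of_ne' hy, (y.2.1.1 _).2⟩
  intro y z h
  by_cases hy : y.1 (new _) = 0 <;> by_cases hz : z.1 (new _) = 0
  · rw [growMap_of_eq_zero hy, growMap_of_eq_zero hz] at h
    exact eq_of_restrictOld_eq (hj h) (hy.trans hz.symm)
  · rw [growMap_of_eq_zero hy, growMap_of_ne_zero hz] at h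
    exact (hdisj _ (mem_Ioc hz) ⟨_, h⟩).elim
  · rw [growMap_of_ne_zero hy, growMap_of_eq_zero hz] at h
    exact (hdisj _ (mem_Ioc hy) ⟨_, h.symm⟩).elim
  · rw [growMap_of_ne_zero hy, growMap_of_ne_zero hz] at h
    exact eq_of_restrictOld_eq ((hx.restrictOld_eq hy).trans (hx.restrictOld_eq hz).symm)
      (hγ (y.2.1.1 _) (z.2.1.1 _) h)

lemma range_growMap (hx : IsVertex x) (h0 : γ 0 = j x) :
    range (growMap (edgesBelow x) j γ) = range j ∪ γ '' Icc 0 1 := by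
  refine Subset.antisymm ?_ (union_subset ?_ ?_)
  · rintro _ ⟨y, rfl⟩
    by_cases hy : y.1 (new _) = 0
    · exact Or.inl ⟨_, (growMap_of_eq_zero hy).symm⟩
    · exact Or.inr ⟨_, y.2.1.1 _, (growMap_of_ne_zero hy).symm⟩
  · rintro _ ⟨x, rfl⟩
    exact ⟨_, growMap_growPoint x⟩
  · rintro _ ⟨t, ht, rfl⟩
    exact ⟨_, growMap_tipPoint hx h0 ⟨t, ht⟩⟩

lemma continuous_growMap [TopologicalSpace X] (hx : IsVertex x) (hj : Continuous j)
    (hγ : Continuous γ) (h0 : γ 0 = j x) : Continuous (growMap (edgesBelow x) j γ) := by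
  have continuous_new : Continuous fun y : forestTree (GrownForest (edgesBelow x)) => y.1 (new _) :=
    (continuous_apply _).comp continuous_subtype_val
  have cover : {y : forestTree (GrownForest (edgesBelow x)) | y.1 (new _) = 0} ∪
      {y | restrictOld y = x} = univ :=
    eq_univ_of_forall fun y => or_iff_not_imp_left.2 fun hy => hx.restrictOld_eq hy
  rw [← continuousOn_univ, ← cover]
  refine ContinuousOn.union_of_isClosed ?_ ?_ (isClosed_eq continuous_new continuous_const)
    (isClosed_eq continuous_restrictOld continuous_const)
  · exact (hj.comp continuous_restrictOld).continuousOn.congr fun y hy => growMap_of_eq_zero hy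
  · refine (hγ.comp continuous_new).continuousOn.congr fun y hy => ?_
    by_cases hy0 : y.1 (new _) = 0
    · rw [growMap_of_eq_zero hy0, Function.comp_apply, hy0, h0]
      exact congrArg j hy
    · exact growMap_of_ne_zero hy0

end GrowMap

end Growth

section Concatenation

variable {X : Type*} {α β : ℝ → X} {t : ℝ}

open Classical in
/-- The path that runs through `α` on `[0, 1/2]` and through `β` on `[1/2, 1]`. -/
noncomputable def concatPath (α β : ℝ → X) (t : ℝ) : X :=
  if t ≤ 1 / 2 then α (2 * t) else β (2 * t - 1)

lemma concatPath_of_le (h : t ≤ 1 / 2) : concatPath α β t = α (2 * t) := if_pos h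

lemma concatPath_of_lt (h : 1 / 2 < t) : concatPath α β t = β (2 * t - 1) := if_neg h.not_ge

lemma concatPath_zero : concatPath α β 0 = α 0 := by
  rw [concatPath_of_le (by norm_num), mul_zero]

lemma concatPath_one : concatPath α β 1 = β 1 := by
  rw [concatPath_of_lt (by norm_num)]
  norm_num

lemma continuous_concatPath [TopologicalSpace X] (hα : Continuous α) (hβ : Continuous β)
    (h : α 1 = β 0) : Continuous (concatPath α β) := by
  refine Continuous.if_le (hα.comp (continuous_const.mul continuous_id))
    (hβ.comp ((continuous_const.mul continuous_id).sub continuous_const)) continuous_id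
    continuous_const fun t ht => ?_
  obtain rfl : t = 1 / 2 := ht
  norm_num [h]

lemma image_concatPath_subset :
    concatPath α β '' Icc 0 1 ⊆ α '' Icc 0 1 ∪ β '' Icc 0 1 := by
  rintro _ ⟨t, ht, rfl⟩
  rcases le_or_gt t (1 / 2) with h | h
  · rw [concatPath_of_le h]
    exact Or.inl ⟨_, ⟨by linarith [ht.1], by linarith⟩, rfl⟩
  · rw [concatPath_of_lt h]
    exact Or.inr ⟨_, ⟨by linarith, by linarith [ht.2]⟩, rfl⟩

lemma injOn_concatPath {B : Set ℝ} (hα : InjOn α (Icc 0 1)) (hβ : InjOn β B)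
    (h : ∀ s ∈ Icc (0 : ℝ) 1, ∀ t ∈ B, α s ≠ β t) :
    InjOn (concatPath α β) {t | 0 ≤ t ∧ (1 / 2 < t → 2 * t - 1 ∈ B)} := by
  intro s hs t ht hst
  have two_mul_mem {r : ℝ} (h0 : 0 ≤ r) (hr : r ≤ 1 / 2) : 2 * r ∈ Icc (0 : ℝ) 1 :=
    ⟨by linarith, by linarith⟩
  rcases le_or_gt s (1 / 2) with hs' | hs' <;> rcases le_or_gt t (1 / 2) with ht' | ht'
  · rw [concatPath_of_le hs', concatPath_of_le ht'] at hst
    linarith [hα (two_mul_mem hs.1 hs') (two_mul_mem ht.1 ht') hst]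
  · rw [concatPath_of_le hs', concatPath_of_lt ht'] at hst
    exact (h _ (two_mul_mem hs.1 hs') _ (ht.2 ht') hst).elim
  · rw [concatPath_of_lt hs', concatPath_of_le ht'] at hst
    exact (h _ (two_mul_mem ht.1 ht') _ (hs.2 hs') hst.symm).elim
  · rw [concatPath_of_lt hs', concatPath_of_lt ht'] at hst
    linarith [hβ (hs.2 hs') (ht.2 ht') hst]

end Concatenation

section ArcJoined

variable {X : Type*} [TopologicalSpace X] {S T : Set X} {u v : X}

/-- The distinct points `u` and `v` are joined by an arc contained in `S`, parametrized by a path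
that is injective on `[0, 1]`. -/
def ArcJoined (S : Set X) (u v : X) : Prop :=
  ∃ f : ℝ → X, Continuous f ∧ InjOn f (Icc 0 1) ∧ f '' Icc 0 1 ⊆ S ∧ f 0 = u ∧ f 1 = v

lemma ArcJoined.mono (h : ArcJoined S u v) (hST : S ⊆ T) : ArcJoined T u v := by
  obtain ⟨f, hf, hi, hS, hfu, hfv⟩ := h
  exact ⟨f, hf, hi, hS.trans hST, hfu, hfv⟩

lemma arcJoined_image {γ : ℝ → X} (hγ : Continuous γ) (hi : InjOn γ (Icc 0 1)) {s t : ℝ}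
    (hs : s ∈ Icc (0 : ℝ) 1) (ht : t ∈ Icc (0 : ℝ) 1) (hst : s ≠ t) :
    ArcJoined (γ '' Icc 0 1) (γ s) (γ t) := by
  have lineMap_mem {r : ℝ} (hr : r ∈ Icc (0 : ℝ) 1) : AffineMap.lineMap s t r ∈ Icc (0 : ℝ) 1 :=
    (convex_Icc (0 : ℝ) 1).lineMap_mem hs ht hr
  refine ⟨γ ∘ AffineMap.lineMap s t, hγ.comp AffineMap.lineMap_continuous,
    hi.comp (AffineMap.lineMap_injective ℝ hst).injOn fun r hr => lineMap_mem hr, ?_,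
    congrArg γ (AffineMap.lineMap_apply_zero s t), congrArg γ (AffineMap.lineMap_apply_one s t)⟩
  rintro _ ⟨r, hr, rfl⟩
  exact ⟨_, lineMap_mem hr, rfl⟩

lemma ArcJoined.symm (h : ArcJoined S u v) : ArcJoined S v u := by
  obtain ⟨f, hf, hi, hS, rfl, rfl⟩ := h
  exact (arcJoined_image hf hi ⟨zero_le_one, le_rfl⟩ ⟨le_rfl, zero_le_one⟩ one_ne_zero).mono hS

lemma ArcJoined.concat {γ : ℝ → X} (h : ArcJoined S u (γ 0)) (hγ : Continuous γ)
    (hi : InjOn γ (Icc 0 1)) (hS : ∀ t ∈ Ioc (0 : ℝ) 1, γ t ∉ S) :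
    ArcJoined (S ∪ γ '' Icc 0 1) u (γ 1) := by
  obtain ⟨f, hf, hif, hfS, rfl, hfv⟩ := h
  have injOn := injOn_concatPath hif (hi.mono Ioc_subset_Icc_self)
    fun s hs t ht h => hS t ht (h ▸ hfS ⟨s, hs, rfl⟩)
  refine ⟨concatPath f γ, continuous_concatPath hf hγ hfv, injOn.mono fun t ht => ?_,
    image_concatPath_subset.trans (union_subset_union_left _ hfS), concatPath_zero, concatPath_one⟩
  exact ⟨ht.1, fun h => ⟨by linarith, by linarith [ht.2]⟩⟩

lemma ArcJoined.concat_of_mem_Ioc {γ : ℝ → X} (h : ArcJoined S u (γ 0)) (hγ : Continuous γ)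
    (hi : InjOn γ (Icc 0 1)) (hS : ∀ t ∈ Ioc (0 : ℝ) 1, γ t ∉ S) {t : ℝ} (ht : t ∈ Ioc (0 : ℝ) 1) :
    ArcJoined (S ∪ γ '' Icc 0 1) u (γ t) := by
  have mul_mem_Icc {r : ℝ} (hr : r ∈ Icc (0 : ℝ) 1) : t * r ∈ Icc (0 : ℝ) 1 :=
    ⟨mul_nonneg ht.1.le hr.1, mul_le_one₀ ht.2 hr.1 hr.2⟩
  have joined := ArcJoined.concat (γ := fun r => γ (t * r)) (S := S) (u := u)
    (by simpa only [mul_zero] using h) (by fun_prop)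
    (fun r hr r' hr' e => mul_left_cancel₀ ht.1.ne' (hi (mul_mem_Icc hr) (mul_mem_Icc hr') e))
    fun r hr => hS _ ⟨mul_pos ht.1 hr.1, (mul_mem_Icc (Ioc_subset_Icc_self hr)).2⟩
  rw [mul_one] at joined
  refine joined.mono (union_subset_union_right _ ?_)
  rintro _ ⟨r, hr, rfl⟩
  exact ⟨_, mul_mem_Icc hr, rfl⟩

/-- Any two distinct points of `S` are joined by an arc in `S`. -/
def IsArcwiseConnected (S : Set X) : Prop := ∀ u ∈ S, ∀ v ∈ S, u ≠ v → ArcJoined S u v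

lemma IsArcwiseConnected.union_image {γ : ℝ → X} (h : IsArcwiseConnected S) (hγ : Continuous γ)
    (hi : InjOn γ (Icc 0 1)) (h0 : γ 0 ∈ S) (hS : ∀ t ∈ Ioc (0 : ℝ) 1, γ t ∉ S) :
    IsArcwiseConnected (S ∪ γ '' Icc 0 1) := by
  have joined_of_mem {u : X} (hu : u ∈ S) {t : ℝ} (ht : t ∈ Icc (0 : ℝ) 1) (hut : u ≠ γ t) :
      ArcJoined (S ∪ γ '' Icc 0 1) u (γ t) := by
    rcases ht.1.eq_or_lt with rfl | ht0
    · exact (h u hu _ h0 hut).mono subset_union_left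
    by_cases hu0 : u = γ 0
    · rw [hu0]
      exact (arcJoined_image hγ hi ⟨le_rfl, zero_le_one⟩ ht ht0.ne).mono subset_union_right
    exact (h u hu _ h0 hu0).concat_of_mem_Ioc hγ hi hS ⟨ht0, ht.2⟩
  rintro u (hu | ⟨s, hs, rfl⟩) v (hv | ⟨t, ht, rfl⟩) huv
  · exact (h u hu v hv huv).mono subset_union_left
  · exact joined_of_mem hu ht huv
  · exact (joined_of_mem hv hs huv.symm).symm
  · exact (arcJoined_image hγ hi hs ht fun h => huv (congrArg γ h)).mono subset_union_right

lemma exists_isSimpleClosedCurve [T2Space X] {f : ℝ → X} (hf : Continuous f) (h : f 0 = f 1)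
    (hi : InjOn f (Ico 0 1)) : ∃ S : Set X, IsSimpleClosedCurve S := by
  have : Fact ((0 : ℝ) < 1) := ⟨one_pos⟩
  have continuous_lift : Continuous (AddCircle.liftIco (1 : ℝ) 0 f) :=
    AddCircle.liftIco_zero_continuous h hf.continuousOn
  have injective_lift : Function.Injective (AddCircle.liftIco (1 : ℝ) 0 f) := by
    intro x y hxy
    obtain ⟨s, hs, rfl⟩ := AddCircle.eq_coe_Ico x
    obtain ⟨t, ht, rfl⟩ := AddCircle.eq_coe_Ico y
    rw [AddCircle.liftIco_zero_coe_apply hs, AddCircle.liftIco_zero_coe_apply ht] at hxy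
    rw [hi hs ht hxy]
  have isEmbedding_lift := (continuous_lift.isClosedEmbedding injective_lift).isEmbedding
  exact ⟨_, ⟨isEmbedding_lift.toHomeomorph.symm.trans (AddCircle.homeomorphCircle one_ne_zero)⟩⟩

lemma ArcJoined.exists_isSimpleClosedCurve [T2Space X] {γ : ℝ → X} (h : ArcJoined S (γ 1) (γ 0))
    (hγ : Continuous γ) (hi : InjOn γ (Ioo 0 1)) (hS : ∀ t ∈ Ioo (0 : ℝ) 1, γ t ∉ S) :
    ∃ S : Set X, IsSimpleClosedCurve S := by
  obtain ⟨f, hf, hif, hfS, hf0, hf1⟩ := h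
  have injOn := injOn_concatPath hif hi fun s hs t ht h => hS t ht (h ▸ hfS ⟨s, hs, rfl⟩)
  refine _root_.exists_isSimpleClosedCurve (continuous_concatPath hf hγ hf1) ?_
    (injOn.mono fun t ht => ?_)
  · rw [concatPath_zero, concatPath_one, hf0]
  · exact ⟨ht.1, fun h => ⟨by linarith, by linarith [ht.2]⟩⟩

end ArcJoined

section ArcDecomposition

lemma unitInterval_homeomorph_zero (k : Icc (0 : ℝ) 1 ≃ₜ Icc (0 : ℝ) 1) : k 0 = 0 ∨ k 0 = 1 := by
  rcases k.continuous.strictMono_of_inj k.injective with hk | hk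
  · obtain ⟨t, ht⟩ := k.surjective 0
    exact Or.inl (((hk.monotone t.2.1).trans_eq ht).antisymm (k 0).2.1)
  · obtain ⟨t, ht⟩ := k.surjective 1
    exact Or.inr (le_antisymm (k 0).2.2 (ht.ge.trans (hk.antitone t.2.1)))

lemma exists_mem_Ioo_forall_eq {X : Type*} {γ : ℝ → X} (hγ : InjOn γ (Icc 0 1)) (p : X) :
    ∃ c ∈ Ioo (0 : ℝ) 1, ∀ s ∈ Ioo (0 : ℝ) 1, γ s = p → s = c := by
  by_cases h : ∃ c ∈ Ioo (0 : ℝ) 1, γ c = p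
  · obtain ⟨c, hc, rfl⟩ := h
    exact ⟨c, hc, fun s hs => hγ (Ioo_subset_Icc_self hs) (Ioo_subset_Icc_self hc)⟩
  · exact ⟨1 / 2, ⟨by norm_num, by norm_num⟩, fun s hs hsp => (h ⟨s, hs, hsp⟩).elim⟩

variable {X : Type*} [TopologicalSpace X] {p : X} {ι : Type*}

/-- The parametrization of the arc `A` by `[0, 1]` given by `h`, extended to be constant on either
side of `[0, 1]`. -/
noncomputable def arcParam {A : Set X} (h : A ≃ₜ Icc (0 : ℝ) 1) (t : ℝ) : X :=
  h.symm (projIcc 0 1 zero_le_one t)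

section ArcParam

variable {A : Set X} (h : A ≃ₜ Icc (0 : ℝ) 1)

lemma arcParam_coe (t : Icc (0 : ℝ) 1) : arcParam h t = h.symm t := by
  rw [arcParam, projIcc_val]

lemma continuous_arcParam : Continuous (arcParam h) :=
  continuous_subtype_val.comp (h.symm.continuous.comp continuous_projIcc)

lemma injOn_arcParam : InjOn (arcParam h) (Icc 0 1) := by
  intro s hs t ht hst
  lift s to Icc (0 : ℝ) 1 using hs
  lift t to Icc (0 : ℝ) 1 using ht
  rw [arcParam_coe, arcParam_coe] at hst
  rw [h.symm.injective (Subtype.ext hst)]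

lemma image_arcParam : arcParam h '' Icc 0 1 = A := by
  refine Subset.antisymm ?_ fun x hx => ⟨h ⟨x, hx⟩, Subtype.prop _, ?_⟩
  · rintro _ ⟨t, -, rfl⟩
    exact Subtype.prop _
  · rw [arcParam_coe, h.symm_apply_apply]

lemma eq_zero_or_one_of_isArcEndpoint {s : ℝ} (hs : s ∈ Icc (0 : ℝ) 1)
    (hA : IsArcEndpoint A (arcParam h s)) : s = 0 ∨ s = 1 := by
  lift s to Icc (0 : ℝ) 1 using hs
  obtain ⟨-, k, hk, -⟩ := hA
  have apply_zero : (k.trans h) 0 = s := by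
    rw [arcParam_coe] at hk
    exact (congrArg h (Subtype.ext hk)).trans (h.apply_symm_apply s)
  rw [← apply_zero]
  exact (unitInterval_homeomorph_zero (k.trans h)).imp (congrArg Subtype.val)
    (congrArg Subtype.val)

end ArcParam

/-- The arcs `γ i` cover the space, and meet each other and the point `p` only at their ends. -/
structure IsArcDecomposition (p : X) (γ : ι → ℝ → X) : Prop where
  continuous (i : ι) : Continuous (γ i)
  injOn (i : ι) : InjOn (γ i) (Icc 0 1)
  endpoint_of_eq {i j : ι} {s t : ℝ} (hs : s ∈ Icc (0 : ℝ) 1) (ht : t ∈ Icc (0 : ℝ) 1)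
    (hij : i ≠ j) (h : γ i s = γ j t) : s = 0 ∨ s = 1
  exists_eq (x : X) : ∃ i, ∃ t ∈ Icc (0 : ℝ) 1, γ i t = x
  endpoint_of_eq_base {i : ι} {s : ℝ} (hs : s ∈ Icc (0 : ℝ) 1) (h : γ i s = p) : s = 0 ∨ s = 1

lemma endpoint_of_one_sub {t : ℝ} (h : 1 - t = 0 ∨ 1 - t = 1) : t = 0 ∨ t = 1 :=
  h.symm.imp sub_eq_self.1 fun h => (sub_eq_zero.1 h).symm

lemma IsArcDecomposition.reverse {γ : ι → ℝ → X} (hγ : IsArcDecomposition p γ) :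
    IsArcDecomposition p fun i t => γ i (1 - t) where
  continuous i := (hγ.continuous i).comp (continuous_const.sub continuous_id)
  injOn i _ hs _ ht h :=
    sub_right_injective (hγ.injOn i (Icc.one_sub_mem hs) (Icc.one_sub_mem ht) h)
  endpoint_of_eq hs ht hij h :=
    endpoint_of_one_sub (hγ.endpoint_of_eq (Icc.one_sub_mem hs) (Icc.one_sub_mem ht) hij h)
  exists_eq x := by
    obtain ⟨i, t, ht, rfl⟩ := hγ.exists_eq x
    exact ⟨i, 1 - t, Icc.one_sub_mem ht, congrArg (γ i) (sub_sub_cancel 1 t)⟩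
  endpoint_of_eq_base hs h :=
    endpoint_of_one_sub (hγ.endpoint_of_eq_base (Icc.one_sub_mem hs) h)

/-- The parametrizations of the two halves of `[0, 1]` cut at `c`. -/
def halfParam (c : ℝ) : Bool → ℝ → ℝ
  | false, t => c * t
  | true, t => c + (1 - c) * t

section HalfParam

variable {c s t : ℝ} {b b' : Bool}

lemma continuous_halfParam : ∀ b, Continuous (halfParam c b)
  | false => continuous_const.mul continuous_id
  | true => continuous_const.add (continuous_const.mul continuous_id)

lemma halfParam_mem (hc : c ∈ Ioo (0 : ℝ) 1) (ht : t ∈ Icc (0 : ℝ) 1) :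
    ∀ b, halfParam c b t ∈ Icc (0 : ℝ) 1
  | false => by
    constructor <;> simp only [halfParam] <;> nlinarith [hc.1, hc.2, ht.1, ht.2]
  | true => by
    constructor <;> simp only [halfParam] <;> nlinarith [hc.1, hc.2, ht.1, ht.2]

lemma halfParam_injective (hc : c ∈ Ioo (0 : ℝ) 1) : ∀ b, Function.Injective (halfParam c b)
  | false => fun _ _ h => mul_left_cancel₀ hc.1.ne' h
  | true => fun _ _ h => mul_left_cancel₀ (sub_pos.2 hc.2).ne' (add_left_cancel h)

lemma halfParam_eq_endpoint (hc : c ∈ Ioo (0 : ℝ) 1) (ht : t ∈ Icc (0 : ℝ) 1)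
    (h : halfParam c b t = 0 ∨ halfParam c b t = c ∨ halfParam c b t = 1) : t = 0 ∨ t = 1 := by
  obtain ⟨hc0, hc1⟩ := hc
  by_contra! hne
  have ht0 := ht.1.lt_of_ne' hne.1
  have ht1 := ht.2.lt_of_ne hne.2
  cases b <;> simp only [halfParam] at h <;> rcases h with h | h | h <;> nlinarith

lemma halfParam_eq_of_ne (hc : c ∈ Ioo (0 : ℝ) 1) (hs : s ∈ Icc (0 : ℝ) 1)
    (ht : t ∈ Icc (0 : ℝ) 1) (hb : b ≠ b') (h : halfParam c b s = halfParam c b' t) :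
    halfParam c b s = c := by
  obtain ⟨hc0, hc1⟩ := hc
  obtain ⟨hs0, hs1⟩ := hs
  obtain ⟨ht0, ht1⟩ := ht
  cases b <;> cases b' <;> simp only [halfParam, ne_eq, not_true_eq_false] at * <;> nlinarith

lemma exists_halfParam_eq (hc : c ∈ Ioo (0 : ℝ) 1) (ht : t ∈ Icc (0 : ℝ) 1) :
    ∃ b, ∃ r ∈ Icc (0 : ℝ) 1, halfParam c b r = t := by
  rcases le_total t c with h | h
  · exact ⟨false, t / c, ⟨div_nonneg ht.1 hc.1.le, (div_le_one hc.1).2 h⟩,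
      mul_div_cancel₀ _ hc.1.ne'⟩
  · have one_sub_pos := sub_pos.2 hc.2
    refine ⟨true, (t - c) / (1 - c), ⟨div_nonneg (sub_nonneg.2 h) one_sub_pos.le,
      (div_le_one one_sub_pos).2 (by linarith [ht.2])⟩, ?_⟩
    simp only [halfParam]
    rw [mul_div_cancel₀ _ one_sub_pos.ne']
    ring

end HalfParam

lemma isArcDecomposition_halves {γ : ι → ℝ → X} {c : ι → ℝ} (hγ : ∀ i, Continuous (γ i))
    (hinj : ∀ i, InjOn (γ i) (Icc 0 1)) (hcov : ∀ x, ∃ i, ∃ t ∈ Icc (0 : ℝ) 1, γ i t = x)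
    (hends : ∀ i j, i ≠ j → ∀ s ∈ Icc (0 : ℝ) 1, ∀ t ∈ Icc (0 : ℝ) 1,
      γ i s = γ j t → s = 0 ∨ s = 1)
    (hc : ∀ i, c i ∈ Ioo (0 : ℝ) 1) (hcp : ∀ i, ∀ s ∈ Ioo (0 : ℝ) 1, γ i s = p → s = c i) :
    IsArcDecomposition p fun (k : ι × Bool) t => γ k.1 (halfParam (c k.1) k.2 t) where
  continuous k := (hγ _).comp (continuous_halfParam _)
  injOn k _ hs _ ht h := halfParam_injective (hc _) _
    (hinj _ (halfParam_mem (hc _) hs _) (halfParam_mem (hc _) ht _) h)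
  endpoint_of_eq {k l s t} hs ht hkl h := by
    obtain ⟨i, b⟩ := k
    obtain ⟨j, b'⟩ := l
    have hs' := halfParam_mem (hc i) hs b
    have ht' := halfParam_mem (hc j) ht b'
    apply halfParam_eq_endpoint (b := b) (hc i) hs
    rcases eq_or_ne i j with rfl | hij
    · have hb : b ≠ b' := fun h => hkl (congrArg (Prod.mk i) h)
      exact Or.inr (Or.inl (halfParam_eq_of_ne (hc i) hs ht hb (hinj i hs' ht' h)))
    · exact (hends i j hij _ hs' _ ht' h).imp_right Or.inr
  exists_eq x := by
    obtain ⟨i, t, ht, rfl⟩ := hcov x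
    obtain ⟨b, r, hr, rfl⟩ := exists_halfParam_eq (hc i) ht
    exact ⟨(i, b), r, hr, rfl⟩
  endpoint_of_eq_base {k s} hs h := by
    have hs' := halfParam_mem (hc k.1) hs k.2
    apply halfParam_eq_endpoint (b := k.2) (hc k.1) hs
    by_contra! hne
    exact hne.2.1 (hcp k.1 _ ⟨hs'.1.lt_of_ne' hne.1, hs'.2.lt_of_ne hne.2.2⟩ h)

lemma IsFiniteGraph.exists_isArcDecomposition {X : Type u} [MetricSpace X] (hX : IsFiniteGraph X)
    (p : X) : ∃ (ι : Type u) (_ : Finite ι) (γ : ι → ℝ → X), IsArcDecomposition p γ := by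
  obtain ⟨-, -, -, 𝒜, isArcSet, cover, endpoints⟩ := hX
  have h (A : 𝒜) : A.1 ≃ₜ Icc (0 : ℝ) 1 := (isArcSet A A.2).some
  choose c hc hcp using fun A => exists_mem_Ioo_forall_eq (injOn_arcParam (h A)) p
  have arcParam_mem (A : 𝒜) {t : ℝ} (ht : t ∈ Icc (0 : ℝ) 1) : arcParam (h A) t ∈ A.1 :=
    (image_arcParam (h A)).le ⟨t, ht, rfl⟩
  refine ⟨𝒜 × Bool, inferInstance, _, isArcDecomposition_halves
    (fun A => continuous_arcParam (h A)) (fun A => injOn_arcParam (h A)) (fun x => ?_)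
    (fun A B hAB s hs t ht hst => ?_) hc hcp⟩
  · obtain ⟨A, hA, hxA⟩ := cover.ge (mem_univ x)
    exact ⟨⟨A, hA⟩, (image_arcParam (h ⟨A, hA⟩)).ge hxA⟩
  · have mem_inter : arcParam (h A) s ∈ A.1 ∩ B.1 :=
      ⟨arcParam_mem A hs, hst ▸ arcParam_mem B ht⟩
    exact eq_zero_or_one_of_isArcEndpoint (h A) hs
      (endpoints A A.2 B B.2 (fun hAB' => hAB (Subtype.ext hAB')) _ mem_inter).1

end ArcDecomposition

section ForestModel

variable {X : Type*} [TopologicalSpace X] {ι : Type*} {p : X} {γ : ι → ℝ → X} {J : Set ι}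

/-- The map `j` embeds the tree of the forest `E`, rooted at `p`, onto the union of `p` and the arcs
indexed by `J`, in such a way that the ends of these arcs become vertices. -/
structure IsForestModel (p : X) (γ : ι → ℝ → X) (J : Set ι) {E : Type*} [PartialOrder E]
    (j : forestTree E → X) : Prop where
  isForestOrder : IsForestOrder E
  continuous : Continuous j
  injective : Function.Injective j
  zero : j 0 = p
  range_eq : range j = insert p (⋃ i ∈ J, γ i '' Icc 0 1)
  vertex : ∀ i ∈ J, ∀ t, t = 0 ∨ t = 1 → ∃ x, j x = γ i t ∧ IsVertex x
  isArcwiseConnected : IsArcwiseConnected (range j)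

lemma isForestModel_empty : IsForestModel p γ ∅ (E := Empty) fun _ => p where
  isForestOrder a := a.elim
  continuous := continuous_const
  injective x y _ := Subtype.ext (funext fun e => e.elim)
  zero := rfl
  range_eq := by
    have : Nonempty (forestTree Empty) := ⟨0⟩
    rw [range_const, biUnion_empty, insert_empty_eq]
  vertex i hi := hi.elim
  isArcwiseConnected := by
    rintro _ ⟨x, rfl⟩ _ ⟨y, rfl⟩ h
    exact (h rfl).elim

namespace IsForestModel

variable {E : Type*} [PartialOrder E] {j : forestTree E → X} {i : ι}

lemma of_reverse (hj : IsForestModel p (fun i t => γ i (1 - t)) J j) : IsForestModel p γ J j where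
  isForestOrder := hj.isForestOrder
  continuous := hj.continuous
  injective := hj.injective
  zero := hj.zero
  range_eq := by
    have image_one_sub (i : ι) : (fun t => γ i (1 - t)) '' Icc 0 1 = γ i '' Icc 0 1 := by
      rw [← Function.comp_def (γ i), image_comp, image_const_sub_Icc, sub_self, sub_zero]
    rw [hj.range_eq]
    simp only [image_one_sub]
  vertex i hi t ht := by
    obtain ⟨x, hx, hxv⟩ := hj.vertex i hi (1 - t)
      (endpoint_of_one_sub (by rwa [sub_sub_cancel]))
    exact ⟨x, hx.trans (congrArg (γ i) (sub_sub_cancel 1 t)), hxv⟩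
  isArcwiseConnected := hj.isArcwiseConnected

lemma reverse (hj : IsForestModel p γ J j) : IsForestModel p (fun i t => γ i (1 - t)) J j :=
  of_reverse (by simpa only [sub_sub_cancel] using hj)

lemma grow (hj : IsForestModel p γ J j) {x : forestTree E} (hx : IsVertex x)
    (hγ : Continuous (γ i)) (hγi : InjOn (γ i) (Icc 0 1)) (h0 : γ i 0 = j x)
    (hdisj : ∀ t ∈ Ioc (0 : ℝ) 1, γ i t ∉ range j) :
    IsForestModel p γ (insert i J) (growMap (edgesBelow x) j (γ i)) where
  isForestOrder := GrownForest.isForestOrder hj.isForestOrder (isChain_edgesBelow x)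
  continuous := continuous_growMap hx hj.continuous hγ h0
  injective := injective_growMap hx hj.injective hγi hdisj
  zero := growMap_zero.trans hj.zero
  range_eq := by
    rw [range_growMap hx h0, hj.range_eq, biUnion_insert, insert_union, union_comm]
  vertex := by
    rintro k (rfl | hk) t ht
    · rcases ht with rfl | rfl
      · exact ⟨growPoint _ x, (growMap_growPoint x).trans h0.symm, hx.growPoint⟩
      · exact ⟨tipPoint hx 1, growMap_tipPoint hx h0 1, hx.tipPoint_one⟩
    · obtain ⟨y, hy, hyv⟩ := hj.vertex k hk t ht
      exact ⟨growPoint _ y, (growMap_growPoint y).trans hy, hyv.growPoint⟩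
  isArcwiseConnected := by
    rw [range_growMap hx h0]
    exact hj.isArcwiseConnected.union_image hγ hγi ⟨x, h0.symm⟩ hdisj

lemma exists_vertex (hj : IsForestModel p γ J j) (hγ : IsArcDecomposition p γ) (hi : i ∉ J)
    {t : ℝ} (ht : t ∈ Icc (0 : ℝ) 1) (h : γ i t ∈ range j) :
    (t = 0 ∨ t = 1) ∧ ∃ x, j x = γ i t ∧ IsVertex x := by
  rw [hj.range_eq] at h
  rcases h with h | h
  · exact ⟨hγ.endpoint_of_eq_base ht h, 0, hj.zero.trans h.symm, fun _ => Or.inl rfl⟩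
  · obtain ⟨k, hk, s, hs, hst⟩ := mem_iUnion₂.1 h
    have hik : i ≠ k := fun h => hi (h ▸ hk)
    refine ⟨hγ.endpoint_of_eq ht hs hik hst.symm, ?_⟩
    rw [← hst]
    exact hj.vertex k hk s (hγ.endpoint_of_eq hs ht hik.symm hst)

variable [T2Space X]

lemma one_notMem_range (hX : ∀ S : Set X, ¬ IsSimpleClosedCurve S) (hj : IsForestModel p γ J j)
    (hγ : IsArcDecomposition p γ) (hi : i ∉ J) (h0 : γ i 0 ∈ range j) : γ i 1 ∉ range j := by
  intro h1
  have apply_one_ne : γ i 1 ≠ γ i 0 := fun h => one_ne_zero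
    (hγ.injOn i ⟨zero_le_one, le_rfl⟩ ⟨le_rfl, zero_le_one⟩ h)
  have interior_disjoint (t) (ht : t ∈ Ioo (0 : ℝ) 1) : γ i t ∉ range j := fun h =>
    (hj.exists_vertex hγ hi (Ioo_subset_Icc_self ht) h).1.elim ht.1.ne' ht.2.ne
  obtain ⟨S, hS⟩ := (hj.isArcwiseConnected _ h1 _ h0 apply_one_ne).exists_isSimpleClosedCurve
    (hγ.continuous i) ((hγ.injOn i).mono Ioo_subset_Icc_self) interior_disjoint
  exact hX S hS

lemma exists_insert_of_zero_mem (hX : ∀ S : Set X, ¬ IsSimpleClosedCurve S)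
    (hj : IsForestModel p γ J j) (hγ : IsArcDecomposition p γ) (hi : i ∉ J)
    (h : γ i 0 ∈ range j) :
    ∃ (D : LowerSet E) (k : forestTree (GrownForest D) → X), IsForestModel p γ (insert i J) k := by
  obtain ⟨-, x, hx, hxv⟩ := hj.exists_vertex hγ hi ⟨le_rfl, zero_le_one⟩ h
  refine ⟨_, _, hj.grow hxv (hγ.continuous i) (hγ.injOn i) hx.symm fun t ht htj => ?_⟩
  rcases (hj.exists_vertex hγ hi (Ioc_subset_Icc_self ht) htj).1 with rfl | rfl
  · exact ht.1.ne rfl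
  · exact hj.one_notMem_range hX hγ hi h htj

lemma exists_insert (hX : ∀ S : Set X, ¬ IsSimpleClosedCurve S) (hj : IsForestModel p γ J j)
    (hγ : IsArcDecomposition p γ) (hi : i ∉ J) {t : ℝ} (ht : t ∈ Icc (0 : ℝ) 1)
    (h : γ i t ∈ range j) :
    ∃ (D : LowerSet E) (k : forestTree (GrownForest D) → X), IsForestModel p γ (insert i J) k := by
  rcases (hj.exists_vertex hγ hi ht h).1 with rfl | rfl
  · exact hj.exists_insert_of_zero_mem hX hγ hi h
  · obtain ⟨D, k, hk⟩ := hj.reverse.exists_insert_of_zero_mem hX hγ.reverse hi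
      (by rwa [sub_zero])
    exact ⟨D, k, hk.of_reverse⟩

lemma surjective_of_disjoint [Finite ι] [PreconnectedSpace X]
    (hj : IsForestModel p γ J j) (hγ : IsArcDecomposition p γ)
    (h : ∀ i ∉ J, ∀ t ∈ Icc (0 : ℝ) 1, γ i t ∉ range j) : Function.Surjective j := by
  by_contra hsurj
  obtain ⟨y, hy⟩ := not_forall.1 hsurj
  have cover : univ ⊆ range j ∪ ⋃ i ∈ Jᶜ, γ i '' Icc 0 1 := fun x _ => by
    obtain ⟨i, t, ht, rfl⟩ := hγ.exists_eq x
    by_cases hi : i ∈ J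
    · rw [hj.range_eq]
      exact Or.inl (Or.inr (mem_iUnion₂.2 ⟨i, hi, t, ht, rfl⟩))
    · exact Or.inr (mem_iUnion₂.2 ⟨i, hi, t, ht, rfl⟩)
  have isClosed_rest : IsClosed (⋃ i ∈ Jᶜ, γ i '' Icc 0 1) :=
    (toFinite _).isClosed_biUnion fun i _ => (isCompact_Icc.image (hγ.continuous i)).isClosed
  obtain ⟨x, -, hx, hx'⟩ := isPreconnected_closed_iff.1 isPreconnected_univ (range j)
    (⋃ i ∈ Jᶜ, γ i '' Icc 0 1) (isCompact_range hj.continuous).isClosed isClosed_rest cover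
    ⟨p, trivial, 0, hj.zero⟩ ⟨y, trivial, (cover (mem_univ y)).resolve_left hy⟩
  obtain ⟨i, hi, t, ht, rfl⟩ := mem_iUnion₂.1 hx'
  exact h i hi t ht hx

end IsForestModel

lemma IsTree.exists_forestTree {X : Type*} [MetricSpace X] (hX : IsTree X) (p : X) :
    ∃ (E : Type) (_ : PartialOrder E) (_ : Finite E) (J : forestTree E ≃ₜ X),
      IsForestOrder E ∧ J 0 = p := by
  obtain ⟨ι, _, γ, hγ⟩ := hX.1.exists_isArcDecomposition p
  obtain ⟨J, ⟨E, _, _, j, hj⟩, maximal⟩ := (toFinite {J : Set ι | ∃ (E : Type)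
    (_ : PartialOrder E) (_ : Finite E) (j : forestTree E → X),
      IsForestModel p γ J j}).exists_maximal
    ⟨∅, Empty, inferInstance, inferInstance, _, isForestModel_empty⟩
  have disjoint : ∀ i ∉ J, ∀ t ∈ Icc (0 : ℝ) 1, γ i t ∉ range j := fun i hi t ht h => by
    obtain ⟨D, k, hk⟩ := hj.exists_insert hX.2 hγ hi ht h
    exact hi (maximal ⟨_, inferInstance, inferInstance, k, hk⟩ (subset_insert i J)
      (mem_insert i J))
  have : ConnectedSpace X := hX.1.2.1
  have surjective := hj.surjective_of_disjoint hγ disjoint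
  exact ⟨E, _, ‹_›, Continuous.homeoOfEquivCompactToT2
    (f := Equiv.ofBijective j ⟨hj.injective, surjective⟩) hj.continuous, hj.isForestOrder, hj.zero⟩

end ForestModel

section Reindex

variable {E F : Type*} [PartialOrder E] [PartialOrder F]

lemma comp_mem_forestTree (φ : E ≃o F) {f : F → ℝ} (hf : f ∈ forestTree F) :
    f ∘ φ ∈ forestTree E :=
  ⟨⟨fun e => hf.1.1 (φ e), fun a b hab => hf.1.2 (φ a) (φ b) (φ.lt_iff_lt.2 hab)⟩,
    fun a b ha hb => (hf.2 (φ a) (φ b) ha hb).imp φ.le_iff_le.1 φ.le_iff_le.1⟩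

/-- The homeomorphism of trees induced by an isomorphism of forests. -/
def forestTreeCongr (φ : E ≃o F) : forestTree F ≃ₜ forestTree E where
  toFun f := ⟨f.1 ∘ φ, comp_mem_forestTree φ f.2⟩
  invFun f := ⟨f.1 ∘ φ.symm, comp_mem_forestTree φ.symm f.2⟩
  left_inv f := Subtype.ext (funext fun e => congrArg f.1 (φ.apply_symm_apply e))
  right_inv f := Subtype.ext (funext fun e => congrArg f.1 (φ.symm_apply_apply e))
  continuous_toFun := Continuous.subtype_mk (f := fun (f : forestTree F) => f.1 ∘ φ)
    (continuous_pi fun e => (continuous_apply (φ e)).comp continuous_subtype_val) _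
  continuous_invFun := Continuous.subtype_mk (f := fun (f : forestTree E) => f.1 ∘ φ.symm)
    (continuous_pi fun e => (continuous_apply (φ.symm e)).comp continuous_subtype_val) _

lemma forestTreeCongr_zero (φ : E ≃o F) : forestTreeCongr φ 0 = 0 := rfl

end Reindex

lemma IsTree.exists_branching_forestTree {X : Type*} [MetricSpace X] (hX : IsTree X) (p : X) :
    ∃ (E : Type) (_ : PartialOrder E) (_ : Finite E) (J : forestTree E ≃ₜ X),
      IsForestOrder E ∧ IsBranchingOrder E ∧ J 0 = p := by
  obtain ⟨E, _, _, J, hE, hJ⟩ := hX.exists_forestTree p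
  obtain ⟨F, _, _, K, hF, hFB, hK⟩ := hE.exists_isBranchingOrder
  exact ⟨F, _, ‹_›, K.trans J, hF, hFB, (congrArg J hK).trans hJ⟩

theorem statement16_general {X Y : Type*} [MetricSpace X] [MetricSpace Y]
    (hX : IsTree X) (hY : IsTree Y) (p : X) (q : Y) (h : CP X p ≃ₜ CP Y q) :
    ∃ 𝔥 : X ≃ₜ Y, 𝔥 p = q := by
  obtain ⟨E, _, _, J, hE, hEB, rfl⟩ := hX.exists_branching_forestTree p
  obtain ⟨F, _, _, K, hF, hFB, rfl⟩ := hY.exists_branching_forestTree q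
  have rootedHomeomorph : rootedSets F ≃ₜ rootedSets E :=
    (rootedContinuumHomeomorph hF K).trans (h.symm.trans (rootedContinuumHomeomorph hE J).symm)
  obtain ⟨φ⟩ := exists_orderIso_of_rootedSets_homeomorph hF hFB hE hEB rootedHomeomorph
  refine ⟨J.symm.trans ((forestTreeCongr φ).trans K), ?_⟩
  rw [Homeomorph.trans_apply, Homeomorph.trans_apply, J.symm_apply_apply, forestTreeCongr_zero]

theorem statement16 {X Y : Type u} [MetricSpace X] [MetricSpace Y]
    (hX : IsTree X) (hY : IsTree Y)
    (p : X) (hp : p ∈ ramifIn (univ : Set X)) (q : Y)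
    (h : CP X p ≃ₜ CP Y q) :
    ∃ 𝔥 : X ≃ₜ Y, 𝔥 p = q :=
  statement16_general hX hY p q h
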